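/- arXiv:2110.07854 — 2 statements merged into one kernel-verified Lean document; each statement's English description precedes it below -/
import Mathlib

section
/- For every prime p, every integer N ≥ 2, every integer v ∈ ℤ, and every nonempty subset I ⊆ [N], the integral 𝒵_I(p^v ℤ_p, s) converges absolutely if and only if s ∈ Ω_I, and in this case 𝒵_I(p^v ℤ_p, s) = (1 / p^{(v−1)(e_I(s)+1) + #I}) · Σ_{𝔖 ∈ ℛ_I} ∏_{λ ∈ ℬ(𝔖)} (p−1)_{deg_𝔖(λ)−1} / (p^{e_λ(s)} − 1). In particular, taking I = [N] and v = 0 gives: 𝒵_N(ℤ_p, s) converges absolutely if and only if s ∈ Ω_N, and then 𝒵_N(ℤ_p, s) = p^{Σ_{i<j} s_{ij}} · Σ_{𝔖 ∈ ℛ_N} ∏_{λ ∈ ℬ(𝔖)} (p−1)_{deg_𝔖(λ)−1} / (p^{e_λ(s)} − 1). -/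
open MeasureTheory
open scoped LinearAlgebra.Projectivization

namespace LogCoulomb

noncomputable section

/-! ### The projective line over `ℚ_p`, its spherical metric and `PGL₂`-invariant measure -/

variable (p : ℕ) [Fact p.Prime]

instance : MeasurableSpace ℚ_[p] := borel _
instance : BorelSpace ℚ_[p] := ⟨rfl⟩

/-- The projective line over `ℚ_p`. -/
abbrev P1 := ℙ ℚ_[p] (Fin 2 → ℚ_[p])

instance : TopologicalSpace (P1 p) :=
  inferInstanceAs (TopologicalSpace (Quotient _))

instance : MeasurableSpace (P1 p) := borel _
instance : BorelSpace (P1 p) := ⟨rfl⟩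

/-- Spherical distance on homogeneous coordinates:
`δ((x₀,x₁),(y₀,y₁)) = |x₀y₁ - x₁y₀| / (max(|x₀|,|x₁|) ⬝ max(|y₀|,|y₁|))`. -/
def sdelta (x y : Fin 2 → ℚ_[p]) : ℝ :=
  ‖x 0 * y 1 - x 1 * y 0‖ / (max ‖x 0‖ ‖x 1‖ * max ‖y 0‖ ‖y 1‖)

/-- The spherical metric on `ℙ¹(ℚ_p)`, defined via the canonical representatives. -/
def pdelta (ξ η : P1 p) : ℝ := sdelta p ξ.rep η.rep

open Classical in
/-- The action of a matrix on `ℙ¹(ℚ_p)`: `[x₀:x₁] ↦ [a x₀ + b x₁ : c x₀ + d x₁]`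
(well-defined, and given by the first branch of the `if`, whenever `A` is invertible). -/
def mobius (A : Matrix (Fin 2) (Fin 2) ℚ_[p]) (ξ : P1 p) : P1 p :=
  if h : A.mulVec ξ.rep ≠ 0 then Projectivization.mk ℚ_[p] (A.mulVec ξ.rep) h else ξ

/-- `ν` is invariant under the action of `GL₂(ℤ_p)` on `ℙ¹(ℚ_p)`; membership of the matrix
entries in `ℤ_p`, and invertibility of the matrix over `ℤ_p`, are phrased via the `p`-adic
norm on `ℚ_p`. -/
def IsGLInvariant (ν : Measure (P1 p)) : Prop :=
  ∀ A : Matrix (Fin 2) (Fin 2) ℚ_[p],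
    (∀ i j, ‖A i j‖ ≤ 1) → ‖A.det‖ = 1 →
      ∀ M : Set (P1 p), MeasurableSet M → ν (mobius p A '' M) = ν M

/-- The embedding `ι : ℚ_p → ℙ¹(ℚ_p)`, `x ↦ [x : 1]`. -/
def iota (x : ℚ_[p]) : P1 p :=
  Projectivization.mk ℚ_[p] ![x, 1] (by
    intro h
    have h1 := congrFun h 1
    simp at h1)

/-! ### Canonical partition functions -/

/-- The pairs `(i,j)` with `i < j`. -/
def pairs (N : ℕ) : Finset (Fin N × Fin N) := Finset.univ.filter fun q => q.1 < q.2

/-- The closed unit ball `ℤ_p = R` inside `ℚ_p`. -/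
def Zball : Set ℚ_[p] := {x | ‖x‖ ≤ 1}

/-- The open unit ball `pℤ_p = P` inside `ℚ_p`. -/
def Pball : Set ℚ_[p] := {x | ‖x‖ < 1}

/-- The one-component canonical partition function
`Z_N(X, β) = ∫_{X^N} ∏_{i<j} |x_i - x_j|^β dμ^N` (as a Bochner integral, whether or not it
converges absolutely). -/
def ZN (μ : Measure ℚ_[p]) [SigmaFinite μ] (X : Set ℚ_[p]) (N : ℕ) (β : ℂ) : ℂ :=
  ∫ x : Fin N → ℚ_[p], ∏ q ∈ pairs N, (‖x q.1 - x q.2‖ : ℂ) ^ β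
    ∂(Measure.pi fun _ => μ.restrict X)

/-- The multivariate canonical partition function
`𝒵_I(X, s) = ∫_{X^I} ∏_{i<j, i,j ∈ I} |x_i - x_j|^{s_{ij}} dμ^I` for a subset `I ⊆ [N]`. -/
def ZI (μ : Measure ℚ_[p]) [SigmaFinite μ] (X : Set ℚ_[p]) {N : ℕ} (I : Finset (Fin N))
    (s : Fin N → Fin N → ℂ) : ℂ :=
  ∫ x : I → ℚ_[p],
    ∏ q ∈ Finset.univ.filter (fun q : (↥I) × (↥I) => (q.1 : Fin N) < (q.2 : Fin N)),
      (‖x q.1 - x q.2‖ : ℂ) ^ s q.1.1 q.2.1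
    ∂(Measure.pi fun _ => μ.restrict X)

/-- The multivariate canonical partition function
`𝒵_N(ℙ¹(ℚ_p), s) = ∫_{(ℙ¹(ℚ_p))^N} ∏_{i<j} δ(ξ_i,ξ_j)^{s_{ij}} dν^N`. -/
def ZP1s (ν : Measure (P1 p)) [SigmaFinite ν] (N : ℕ) (s : Fin N → Fin N → ℂ) : ℂ :=
  ∫ x : Fin N → P1 p, ∏ q ∈ pairs N, ((pdelta p (x q.1) (x q.2) : ℝ) : ℂ) ^ s q.1 q.2
    ∂(Measure.pi fun _ => ν)

/-- The one-component canonical partition function `Z_N(ℙ¹(ℚ_p), β)`. -/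
def ZP1 (ν : Measure (P1 p)) [SigmaFinite ν] (N : ℕ) (β : ℂ) : ℂ :=
  ∫ x : Fin N → P1 p, ∏ q ∈ pairs N, ((pdelta p (x q.1) (x q.2) : ℝ) : ℂ) ^ β
    ∂(Measure.pi fun _ => ν)

/-! ### The quadratic recurrence -/

/-- The factor `ρ_{N,k}(t,β)` appearing in the quadratic recurrence; here
`N.choose 2 = N(N-1)/2`. -/
def rho (N k : ℕ) (t : ℝ) (β : ℂ) : ℂ :=
  if t = 0 then
    (((N : ℂ) + (N.choose 2 : ℂ) * β) * (1 - 2 * (k : ℂ) / (N : ℂ)) + 1) /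
      (((N : ℂ) + (N.choose 2 : ℂ) * β) - 1)
  else
    Complex.sinh (((t : ℂ) / 2) * (((N : ℂ) + (N.choose 2 : ℂ) * β) * (1 - 2 * (k : ℂ) / (N : ℂ)) + 1)) /
      Complex.sinh (((t : ℂ) / 2) * (((N : ℂ) + (N.choose 2 : ℂ) * β) - 1))

/-- The quadratic recurrence: `F 0 = F 1 = 1` and
`F N t β = ∑_{k=1}^{N-1} (k/N) ρ_{N,k}(t,β) F_{N-k}(t,β) F_k(t,β)` for `N ≥ 2`. -/
def F : ℕ → ℝ → ℂ → ℂ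
  | 0, _, _ => 1
  | 1, _, _ => 1
  | N + 2, t, β =>
    ∑ k ∈ (Finset.Icc 1 (N + 1)).attach,
      (((k : ℕ) : ℂ) / ((N : ℂ) + 2)) * rho (N + 2) k t β *
        F (N + 2 - (k : ℕ)) t β * F (k : ℕ) t β
  decreasing_by
  all_goals
    have hk := Finset.mem_Icc.mp k.2
    omega

/-! ### Splitting chains -/

/-- A splitting chain `Λ_0 > Λ_1 > ⋯ > Λ_L` of set partitions of the subset `I ⊆ [N]`,
beginning with the trivial partition `{I}` and ending with the partition of `I` into
singletons.  (The values `Λ ℓ` for `ℓ > L` are required to be `∅`, so that a chain is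
determined by the genuine data `Λ_0, …, Λ_L`.) -/
structure SplChain (N : ℕ) (I : Finset (Fin N)) where
  L : ℕ
  Λ : ℕ → Finset (Finset (Fin N))
  nonempty_mem : ∀ ℓ ≤ L, ∀ B ∈ Λ ℓ, B.Nonempty
  subset_mem : ∀ ℓ ≤ L, ∀ B ∈ Λ ℓ, B ⊆ I
  cover : ∀ ℓ ≤ L, ∀ i ∈ I, ∃! B, B ∈ Λ ℓ ∧ i ∈ B
  first : Λ 0 = {I}
  last : Λ L = I.image fun i => {i}
  refines : ∀ ℓ < L, ∀ B ∈ Λ (ℓ + 1), ∃ C ∈ Λ ℓ, B ⊆ C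
  strict : ∀ ℓ < L, Λ (ℓ + 1) ≠ Λ ℓ
  trailing : ∀ ℓ, L < ℓ → Λ ℓ = ∅

variable {N : ℕ} {I : Finset (Fin N)}

/-- The branches of a splitting chain: the non-singleton parts,
`ℬ(𝔖) = (Λ_0 ∪ ⋯ ∪ Λ_{L-1}) \ Λ_L`. -/
def SplChain.branches (S : SplChain N I) : Finset (Finset (Fin N)) :=
  ((Finset.range S.L).biUnion S.Λ) \ S.Λ S.L

/-- The depth `ℓ_𝔖(λ) = max {ℓ : λ ∈ Λ_ℓ}` of a branch. -/
def SplChain.depth (S : SplChain N I) (lam : Finset (Fin N)) : ℕ :=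
  ((Finset.range (S.L + 1)).filter fun ℓ => lam ∈ S.Λ ℓ).sup id

/-- The degree `deg_𝔖(λ) = #{λ' ∈ Λ_{ℓ_𝔖(λ)+1} : λ' ⊆ λ}` of a branch. -/
def SplChain.degree (S : SplChain N I) (lam : Finset (Fin N)) : ℕ :=
  ((S.Λ (S.depth lam + 1)).filter fun lam' => lam' ⊆ lam).card

/-- A splitting chain is reduced if every branch appears in exactly one partition of the
chain (namely the one at its depth). -/
def SplChain.Reduced (S : SplChain N I) : Prop :=
  ∀ lam ∈ S.branches, ∀ ℓ ≤ S.L, (lam ∈ S.Λ ℓ ↔ ℓ = S.depth lam)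

/-- `e_λ(s) = #λ - 1 + ∑_{i<j, i,j ∈ λ} s_{ij}`. -/
def eexp (lam : Finset (Fin N)) (s : Fin N → Fin N → ℂ) : ℂ :=
  (lam.card : ℂ) - 1 + ∑ q ∈ (pairs N).filter fun q => q.1 ∈ lam ∧ q.2 ∈ lam, s q.1 q.2

/-- Membership in `Ω_I`: `Re e_λ(s) > 0` for every `λ ⊆ I` with `#λ > 1`. -/
def InOmega (I : Finset (Fin N)) (s : Fin N → Fin N → ℂ) : Prop :=
  ∀ lam ⊆ I, 1 < lam.card → 0 < (eexp lam s).re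


/-- The multivariate canonical partition function `𝒵_N(ℤ_p, s)` over `Fin N`-indexed tuples. -/
def ZNs (μ : Measure ℚ_[p]) [SigmaFinite μ] (X : Set ℚ_[p]) (N : ℕ)
    (s : Fin N → Fin N → ℂ) : ℂ :=
  ∫ x : Fin N → ℚ_[p], ∏ q ∈ pairs N, (‖x q.1 - x q.2‖ : ℂ) ^ s q.1 q.2
    ∂(Measure.pi fun _ => μ.restrict X)

/-- The ball `p^v ℤ_p = {x : |x| ≤ p^{-v}}` in `ℚ_p`. -/
def pvball (v : ℤ) : Set ℚ_[p] := {x | ‖x‖ ≤ (p : ℝ) ^ (-v)}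

/-- `G_N(q,β) = N! q^{(1/2)(N choose 2)β} F_N(log q, β)`. -/
def GN (N : ℕ) (β : ℂ) (q : ℝ) : ℂ :=
  (N.factorial : ℂ) * (q : ℂ) ^ ((N.choose 2 : ℂ) * β / 2) * F N (Real.log q) β

/-- `H_N(q,β)`, the efficient formula for `Z_N(ℙ¹(K),β)` as a function of `q`. -/
def HN (N : ℕ) (β : ℂ) (q : ℝ) : ℂ :=
  (N.factorial : ℂ) * ∑ k ∈ Finset.range (N + 1),
    Complex.cosh (((Real.log q : ℂ) / 2) * ((N : ℂ) + (N.choose 2 : ℂ) * β) *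
          (1 - 2 * (k : ℂ) / (N : ℂ))) /
        (2 * Complex.cosh ((Real.log q : ℂ) / 2)) ^ N *
      F (N - k) (Real.log q) β * F k (Real.log q) β

end

end LogCoulomb

namespace LogCoulomb

open Classical in
/-- being a set partition -/
def IsPart {N : ℕ} (I : Finset (Fin N)) (P : Finset (Finset (Fin N))) : Prop :=
  (∀ B ∈ P, B.Nonempty) ∧ (∀ B ∈ P, B ⊆ I) ∧ ∀ i ∈ I, ∃! B, B ∈ P ∧ i ∈ B

theorem IsPart.eq_of_mem {N : ℕ} {I : Finset (Fin N)} {P : Finset (Finset (Fin N))}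
    (h : IsPart I P) {B C : Finset (Fin N)} (hB : B ∈ P) (hC : C ∈ P) {i : Fin N}
    (iB : i ∈ B) (iC : i ∈ C) : B = C :=
  (h.2.2 i (h.2.1 B hB iB)).unique ⟨hB, iB⟩ ⟨hC, iC⟩

/-- fibre partition -/
def fibPart {N p : ℕ} (I : Finset (Fin N)) (f : Fin N → Fin p) : Finset (Finset (Fin N)) :=
  (Finset.univ.image fun c => I.filter (fun i => f i = c)).erase ∅

theorem mem_fibPart {N p : ℕ} {I : Finset (Fin N)} {f : Fin N → Fin p} {B : Finset (Fin N)} :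
    B ∈ fibPart I f ↔ B ≠ ∅ ∧ ∃ c, I.filter (fun i => f i = c) = B := by
  simp [fibPart]

theorem isPart_fibPart {N p : ℕ} (I : Finset (Fin N)) (f : Fin N → Fin p) :
    IsPart I (fibPart I f) := by
  refine ⟨fun B hB => Finset.nonempty_iff_ne_empty.2 (mem_fibPart.1 hB).1, fun B hB => ?_,
    fun i hi => ⟨I.filter (fun j => f j = f i), ⟨?_, by simp [hi]⟩, ?_⟩⟩
  · obtain ⟨_, c, rfl⟩ := mem_fibPart.1 hB
    exact Finset.filter_subset _ _
  · refine mem_fibPart.2 ⟨Finset.nonempty_iff_ne_empty.1 ⟨i, by simp [hi]⟩, _, rfl⟩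
  · rintro B ⟨hB, hiB⟩
    obtain ⟨_, c, rfl⟩ := mem_fibPart.1 hB
    simp at hiB
    rw [hiB.2]

theorem prod_fibPart {N p : ℕ} {R : Type*} [CommSemiring R] (h : Finset (Fin N) → R)
    (h0 : h ∅ = 1) (I : Finset (Fin N)) (f : Fin N → Fin p) :
    ∏ c, h (I.filter (fun i => f i = c)) = ∏ B ∈ fibPart I f, h B := by
  classical
  have h1 : ∏ B ∈ fibPart I f, h B =
      ∏ c ∈ Finset.univ.filter (fun c => I.filter (fun i => f i = c) ≠ ∅),
        h (I.filter (fun i => f i = c)) := by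
    rw [← Finset.prod_image (s := Finset.univ.filter (fun c => I.filter (fun i => f i = c) ≠ ∅))
      (g := fun c => I.filter (fun i => f i = c)) (f := h)]
    · congr 1
      ext B
      rw [mem_fibPart]
      simp only [Finset.mem_image, Finset.mem_filter, Finset.mem_univ, true_and]
      constructor
      · rintro ⟨h1, c, rfl⟩; exact ⟨c, h1, rfl⟩
      · rintro ⟨c, h1, rfl⟩; exact ⟨h1, c, rfl⟩
    · intro c hc d hd hcd
      simp only [Finset.coe_filter, Finset.mem_univ, true_and, Set.mem_ofPred_eq] at hc
      obtain ⟨i, hi⟩ := Finset.nonempty_iff_ne_empty.2 hc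
      have hi' := hi
      simp only at hcd
      rw [hcd] at hi'
      simp at hi hi'
      rw [← hi.2, ← hi'.2]
  rw [h1, Finset.prod_filter]
  refine Finset.prod_congr rfl fun c _ => ?_
  split_ifs with hc
  · rfl
  · rw [not_ne_iff.1 hc, h0]

theorem card_fibPart {N p : ℕ} (I : Finset (Fin N)) (P : Finset (Finset (Fin N)))
    (hP : IsPart I P) :
    (Finset.univ.filter (fun f : Fin N → Fin p => fibPart I f = P)).card =
      p ^ (N - I.card) * p.descFactorial P.card := by
  classical
  choose! b hb hb' using hP.2.2
  have hbm : ∀ i ∈ I, b i ∈ P := fun i hi => (hb i hi).1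
  have hbi : ∀ i ∈ I, i ∈ b i := fun i hi => (hb i hi).2
  have hbu : ∀ B ∈ P, ∀ i ∈ B, b i = B := fun B hB i hi =>
    (hb' i (hP.2.1 B hB hi) B ⟨hB, hi⟩).symm
  let Φ : (P ↪ Fin p) × ({i // i ∉ I} → Fin p) → (Fin N → Fin p) := fun eg i =>
    if h : i ∈ I then eg.1 ⟨b i, hbm i h⟩ else eg.2 ⟨i, h⟩
  have hΦ : Function.Injective Φ := by
    rintro ⟨e, g⟩ ⟨e', g'⟩ h
    have h1 : e = e' := by
      ext ⟨B, hB⟩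
      obtain ⟨i, hi⟩ := hP.1 B hB
      have := congrFun h i
      have hiI := hP.2.1 B hB hi
      simp only [Φ, hiI, dif_pos, hbu B hB i hi] at this
      rw [this]
    have h2 : g = g' := by
      funext ⟨i, hi⟩
      have := congrFun h i
      simpa only [Φ, hi, dif_neg, not_false_eq_true] using this
    rw [h1, h2]
  have key : Finset.univ.filter (fun f : Fin N → Fin p => fibPart I f = P) =
      Finset.univ.image Φ := by
    ext f
    simp only [Finset.mem_filter, Finset.mem_univ, true_and, Finset.mem_image]
    constructor
    · rintro rfl
      choose c hc using fun B : fibPart I f => (mem_fibPart.1 B.2).2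
      refine ⟨⟨⟨c, fun B C hBC => ?_⟩, fun i => f i⟩, ?_⟩
      · apply Subtype.ext
        rw [← hc B, ← hc C, hBC]
      · funext i
        simp only [Φ]
        split_ifs with hi
        · have := hbi i hi
          have h2 := hc ⟨b i, hbm i hi⟩
          simp only at h2
          rw [← h2] at this
          simp at this
          exact this.2.symm
        · rfl
    · rintro ⟨⟨e, g⟩, rfl⟩
      have hfil : ∀ B (hB : B ∈ P), I.filter (fun i => Φ (e, g) i = e ⟨B, hB⟩) = B := by
        intro B hB
        ext i
        simp only [Finset.mem_filter]
        constructor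
        · rintro ⟨hi, h⟩
          simp only [Φ, hi, dif_pos] at h
          have := e.injective h
          simp only [Subtype.mk.injEq] at this
          rw [← this]; exact hbi i hi
        · intro hi
          have hiI := hP.2.1 B hB hi
          refine ⟨hiI, ?_⟩
          simp only [Φ, hiI, dif_pos, hbu B hB i hi]
      ext B
      rw [mem_fibPart]
      constructor
      · rintro ⟨h1, c, rfl⟩
        obtain ⟨i, hi⟩ := Finset.nonempty_iff_ne_empty.2 h1
        simp only [Finset.mem_filter] at hi
        have h3 : c = e ⟨b i, hbm i hi.1⟩ := by
          have h4 := hi.2.symm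
          simpa only [Φ, hi.1, dif_pos] using h4
        rw [h3, hfil]; exact hbm i hi.1
      · intro hB
        exact ⟨Finset.nonempty_iff_ne_empty.1 (hP.1 B hB), _, hfil B hB⟩
  rw [key, Finset.card_image_of_injective _ hΦ, Finset.card_univ, Fintype.card_prod,
    Fintype.card_embedding_eq, Fintype.card_fun]
  have : Fintype.card {i // i ∉ I} = N - I.card := by
    rw [Fintype.card_subtype_compl]; simp
  rw [this]
  simp [mul_comm]

open Classical in
theorem sum_fibers {N p : ℕ} {R : Type*} [CommSemiring R] (h : Finset (Fin N) → R)
    (h0 : h ∅ = 1) (I : Finset (Fin N)) :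
    ∑ f : Fin N → Fin p, ∏ c, h (I.filter (fun i => f i = c)) =
      ∑ P ∈ Finset.univ.filter (IsPart I),
        ((p ^ (N - I.card) * p.descFactorial P.card : ℕ) : R) * ∏ B ∈ P, h B := by
  rw [← Finset.sum_fiberwise_of_maps_to (s := Finset.univ) (g := fibPart I)
    (t := Finset.univ.filter (IsPart I)) (fun f _ => by simp [isPart_fibPart])]
  refine Finset.sum_congr rfl fun P hP => ?_
  simp only [Finset.mem_filter, Finset.mem_univ, true_and] at hP
  rw [← card_fibPart I P hP, ← nsmul_eq_mul]
  apply Finset.sum_eq_card_nsmul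
  intro f hf
  simp only [Finset.mem_filter, Finset.mem_univ, true_and] at hf
  rw [prod_fibPart h h0, hf]

end LogCoulomb

namespace LogCoulomb

section Gen
variable {X : Type*}

/-- general chains from `x` to `t` along `Step`, padded by `z` -/
def Ch (Step : X → X → Prop) (t z : X) (x : X) : Set (ℕ × (ℕ → X)) :=
  {c | c.2 0 = x ∧ c.2 c.1 = t ∧ (∀ l < c.1, Step (c.2 l) (c.2 (l+1))) ∧ ∀ l, c.1 < l → c.2 l = z}

/-- prepend -/
def consCh (x : X) (c : ℕ × (ℕ → X)) : ℕ × (ℕ → X) :=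
  (c.1 + 1, fun n => Nat.casesOn n x c.2)

theorem consCh_inj (x : X) : Function.Injective (consCh x) := by
  rintro ⟨a, f⟩ ⟨b, g⟩ h
  simp only [consCh, Prod.mk.injEq, add_left_inj] at h
  refine Prod.ext h.1 ?_
  funext n
  exact congrFun h.2 (n+1)

open Classical in
theorem chain_sum [Fintype X] (Step : X → X → Prop) (t z : X) (w : X → X → ℂ) (rank : X → ℕ)
    (hrank : ∀ x y, Step x y → rank y < rank x) (ht : ∀ y, ¬ Step t y)
    (G : X → ℂ) (valid : X → Prop) (hv : ∀ x y, Step x y → valid y) (Gt : G t = 1)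
    (hG : ∀ x, valid x → x ≠ t → G x = ∑ y ∈ Finset.univ.filter (Step x), w x y * G y) :
    ∀ x, valid x → (Ch Step t z x).Finite ∧
      ∑ᶠ c ∈ Ch Step t z x, ∏ l ∈ Finset.range c.1, w (c.2 l) (c.2 (l+1)) = G x := by
  intro x
  induction hn : rank x using Nat.strong_induction_on generalizing x with
  | _ n ih =>
  intro hx
  by_cases hxt : x = t
  · subst hxt
    have : Ch Step x z x = {(0, fun n => Nat.casesOn n x (fun _ => z))} := by
      ext ⟨L, f⟩
      simp only [Ch, Set.mem_ofPred_eq, Set.mem_singleton_iff, Prod.mk.injEq]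
      constructor
      · rintro ⟨h0, h1, h2, h3⟩
        have hL : L = 0 := by
          by_contra hL
          have := h2 0 (Nat.pos_of_ne_zero hL)
          rw [h0] at this
          exact ht _ this
        subst hL
        refine ⟨rfl, ?_⟩
        funext n
        cases n with
        | zero => exact h0
        | succ n => exact h3 _ (by omega)
      · rintro ⟨rfl, rfl⟩
        refine ⟨rfl, rfl, by simp, ?_⟩
        intro l hl
        cases l with
        | zero => omega
        | succ n => rfl
    rw [this]
    refine ⟨Set.finite_singleton _, ?_⟩
    rw [finsum_mem_singleton]
    simp [Gt]
  · have key : Ch Step t z x = ⋃ y ∈ (Finset.univ.filter (Step x) : Finset X),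
        consCh x '' Ch Step t z y := by
      ext ⟨L, f⟩
      simp only [Set.mem_iUnion, Finset.mem_filter, Finset.mem_univ, true_and, Set.mem_image,
        exists_prop, Prod.exists]
      constructor
      · rintro ⟨h0, h1, h2, h3⟩
        simp only at h0 h1 h2 h3
        cases L with
        | zero => exact absurd (h0.symm.trans h1) hxt
        | succ L =>
          refine ⟨f 1, ?_, L, fun n => f (n+1), ⟨rfl, h1, fun l hl => h2 (l+1) (by simpa using hl),
            fun l hl => h3 (l+1) (by simpa using hl)⟩, ?_⟩
          · have := h2 0 (by omega)
            rwa [h0] at this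
          · refine Prod.ext rfl ?_
            funext n
            cases n with
            | zero => exact h0.symm
            | succ n => rfl
      · rintro ⟨y, hy, L', f', ⟨h0, h1, h2, h3⟩, h⟩
        simp only [consCh, Prod.mk.injEq] at h h0 h1 h2 h3
        obtain ⟨rfl, rfl⟩ := h
        refine ⟨rfl, h1, ?_, ?_⟩
        · intro l hl
          cases l with
          | zero => show Step x (f' 0); rw [h0]; exact hy
          | succ l => exact h2 l (by simpa using hl)
        · intro l hl
          cases l with
          | zero => omega
          | succ l => exact h3 l (by simpa using hl)
    have ih' : ∀ y ∈ (Finset.univ.filter (Step x) : Finset X), _ := fun y hy =>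
      ih (rank y) (hn ▸ hrank x y (by simpa using hy)) y rfl (hv x y (by simpa using hy))
    have hfin : ∀ y ∈ (Finset.univ.filter (Step x) : Finset X),
        (consCh x '' Ch Step t z y).Finite := fun y hy => (ih' y hy).1.image _
    have hfin2 : (⋃ y ∈ (Finset.univ.filter (Step x) : Finset X),
        consCh x '' Ch Step t z y).Finite := Set.Finite.biUnion (Finset.finite_toSet _) hfin
    rw [key]
    refine ⟨hfin2, ?_⟩
    have := finsum_mem_biUnion (I := ((Finset.univ.filter (Step x) : Finset X) : Set X))
      (t := fun y => consCh x '' Ch Step t z y)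
      (f := fun c => ∏ l ∈ Finset.range c.1, w (c.2 l) (c.2 (l+1))) ?_ (Finset.finite_toSet _) hfin
    · simp only [Finset.mem_coe] at this
      rw [this, hG x hx hxt]
      rw [finsum_mem_finset_eq_sum]
      refine Finset.sum_congr rfl fun y hy => ?_
      rw [finsum_mem_image ((consCh_inj x).injOn), ← (ih' y hy).2, mul_finsum_mem]
      refine finsum_mem_congr rfl fun c hc => ?_
      simp only [consCh]
      rw [Finset.prod_range_succ']
      rw [mul_comm]
      have h0 := hc.1
      simp only [h0]
      rfl
    · intro y hy y' hy' hne
      simp only [Function.onFun]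
      rw [Set.disjoint_left]
      rintro _ ⟨c, hc, rfl⟩ ⟨c', hc', h⟩
      have := consCh_inj x h
      subst this
      exact hne (hc.1.symm.trans hc'.1)
end Gen

end LogCoulomb

namespace LogCoulomb

variable {N : ℕ}

/-- discrete partition -/
def disc (I : Finset (Fin N)) : Finset (Finset (Fin N)) := I.image fun i => {i}

/-- one step in a reduced chain -/
def Stp (I : Finset (Fin N)) (P Q : Finset (Finset (Fin N))) : Prop :=
  IsPart I P ∧ IsPart I Q ∧ P ≠ disc I ∧ (∀ B ∈ Q, ∃ C ∈ P, B ⊆ C) ∧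
    ∀ B ∈ P, B ∈ Q → B.card ≤ 1

theorem isPart_disc (I : Finset (Fin N)) : IsPart I (disc I) := by
  refine ⟨?_, ?_, ?_⟩
  · intro B hB
    simp only [disc, Finset.mem_image] at hB
    obtain ⟨i, _, rfl⟩ := hB
    simp
  · intro B hB
    simp only [disc, Finset.mem_image] at hB
    obtain ⟨i, hi, rfl⟩ := hB
    simpa using hi
  · intro i hi
    refine ⟨{i}, ⟨by simp only [disc, Finset.mem_image]; exact ⟨i, hi, rfl⟩, by simp⟩, ?_⟩
    rintro B ⟨hB, hiB⟩
    simp only [disc, Finset.mem_image] at hB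
    obtain ⟨j, _, rfl⟩ := hB
    simp only [Finset.mem_singleton] at hiB
    rw [hiB]

theorem isPart_single {I : Finset (Fin N)} (hI : I.Nonempty) : IsPart I {I} := by
  refine ⟨by simpa using hI, by simp, ?_⟩
  intro i hi
  exact ⟨I, ⟨by simp, hi⟩, by rintro B ⟨h, _⟩; simpa using h⟩

theorem IsPart.eq_disc {I : Finset (Fin N)} {P : Finset (Finset (Fin N))} (h : IsPart I P)
    (h1 : ∀ B ∈ P, B.card ≤ 1) : P = disc I := by
  have h2 : ∀ B ∈ P, ∃ i ∈ I, B = {i} := by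
    intro B hB
    obtain ⟨i, hi⟩ := Finset.card_eq_one.1 (le_antisymm (h1 B hB) (Finset.card_pos.2 (h.1 B hB)))
    refine ⟨i, h.2.1 B hB (by simp [hi]), hi⟩
  ext B
  simp only [disc, Finset.mem_image]
  constructor
  · intro hB
    obtain ⟨i, hi, rfl⟩ := h2 B hB
    exact ⟨i, hi, rfl⟩
  · rintro ⟨i, hi, rfl⟩
    obtain ⟨C, ⟨hC, hiC⟩, _⟩ := h.2.2 i hi
    obtain ⟨j, hj, rfl⟩ := h2 C hC
    simp only [Finset.mem_singleton] at hiC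
    rwa [hiC]

theorem card_of_mem_disc {I B : Finset (Fin N)} (h : B ∈ disc I) : B.card = 1 := by
  simp only [disc, Finset.mem_image] at h
  obtain ⟨i, _, rfl⟩ := h
  simp

theorem IsPart.eq_single {I : Finset (Fin N)} {P : Finset (Finset (Fin N))} (h : IsPart I P)
    (hI : I ∈ P) : P = {I} := by
  ext B
  simp only [Finset.mem_singleton]
  constructor
  · intro hB
    obtain ⟨i, hi⟩ := h.1 B hB
    exact h.eq_of_mem hB hI hi (h.2.1 B hB hi)
  · rintro rfl; exact hI

/-- if `Q` refines `P` and `i ∈ B ∈ P`, `i ∈ C ∈ Q` then `C ⊆ B`. -/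
theorem sub_of_refines {I : Finset (Fin N)} {P Q : Finset (Finset (Fin N))} (hP : IsPart I P)
    (hr : ∀ B ∈ Q, ∃ C ∈ P, B ⊆ C) {B C : Finset (Fin N)} (hB : B ∈ P) (hC : C ∈ Q) {i : Fin N}
    (iB : i ∈ B) (iC : i ∈ C) : C ⊆ B := by
  obtain ⟨D, hD, hCD⟩ := hr C hC
  rw [hP.eq_of_mem hB hD iB (hCD iC)]
  exact hCD

theorem restrict_isPart {I : Finset (Fin N)} {P Q : Finset (Finset (Fin N))} (hP : IsPart I P)
    (hQ : IsPart I Q) (hr : ∀ B ∈ Q, ∃ C ∈ P, B ⊆ C) {B : Finset (Fin N)} (hB : B ∈ P) :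
    IsPart B (Q.filter (fun C => C ⊆ B)) := by
  refine ⟨fun C hC => hQ.1 C (Finset.mem_filter.1 hC).1, fun C hC => (Finset.mem_filter.1 hC).2, ?_⟩
  intro i hi
  obtain ⟨C, ⟨hC, hiC⟩, _⟩ := hQ.2.2 i (hP.2.1 B hB hi)
  refine ⟨C, ⟨Finset.mem_filter.2 ⟨hC, sub_of_refines hP hr hB hC hi hiC⟩, hiC⟩, ?_⟩
  rintro D ⟨hD, hiD⟩
  exact hQ.eq_of_mem (Finset.mem_filter.1 hD).1 hC hiD hiC

/-- rank -/
noncomputable def rnk (P : Finset (Finset (Fin N))) : ℕ :=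
  by classical exact (Finset.univ.filter fun q : Fin N × Fin N => ∃ B ∈ P, q.1 ∈ B ∧ q.2 ∈ B).card

theorem rnk_lt {I : Finset (Fin N)} {P Q : Finset (Finset (Fin N))} (h : Stp I P Q) :
    rnk Q < rnk P := by
  classical
  obtain ⟨hP, hQ, hd, hr, hc⟩ := h
  unfold rnk
  apply Finset.card_lt_card
  rw [Finset.ssubset_iff_of_subset]
  · have : ∃ B ∈ P, 1 < B.card := by
      by_contra hcon
      push Not at hcon
      exact hd (hP.eq_disc hcon)
    obtain ⟨B, hB, hB1⟩ := this
    have hBQ : B ∉ Q := fun hBQ => absurd (hc B hB hBQ) (by omega)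
    obtain ⟨i, hi⟩ := hP.1 B hB
    obtain ⟨C, ⟨hC, hiC⟩, _⟩ := hQ.2.2 i (hP.2.1 B hB hi)
    have hCB := sub_of_refines hP hr hB hC hi hiC
    have hne : C ≠ B := by rintro rfl; exact hBQ hC
    obtain ⟨j, hj, hjC⟩ := Finset.exists_of_ssubset (lt_of_le_of_ne hCB hne)
    refine ⟨(i, j), ?_, ?_⟩
    · simp only [Finset.mem_filter, Finset.mem_univ, true_and]
      exact ⟨B, hB, hi, hj⟩
    · simp only [Finset.mem_filter, Finset.mem_univ, true_and, not_exists, not_and]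
      intro D hD hiD hjD
      rw [hQ.eq_of_mem hD hC hiD hiC] at hjD
      exact hjC hjD
  · intro q hq
    simp only [Finset.mem_filter, Finset.mem_univ, true_and] at hq ⊢
    obtain ⟨B, hB, h1, h2⟩ := hq
    obtain ⟨C, hC, hBC⟩ := hr B hB
    exact ⟨C, hC, hBC h1, hBC h2⟩

/-- step weight -/
def wgt (u : Finset (Fin N) → ℕ → ℂ) (P Q : Finset (Finset (Fin N))) : ℂ :=
  ∏ B ∈ P.filter (fun B => 1 < B.card), u B (Q.filter (fun C => C ⊆ B)).card

open Classical in
theorem prod_step (I : Finset (Fin N)) (u : Finset (Fin N) → ℕ → ℂ) (W : Finset (Fin N) → ℂ)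
    (Wrec : ∀ B ⊆ I, 1 < B.card → W B =
      ∑ ρ ∈ (Finset.univ.filter (IsPart B)).erase {B}, u B ρ.card * ∏ C ∈ ρ, W C)
    (P : Finset (Finset (Fin N))) (hP : IsPart I P) (hPd : P ≠ disc I) :
    ∏ B ∈ P, W B = ∑ Q ∈ Finset.univ.filter (Stp I P), wgt u P Q * ∏ C ∈ Q, W C := by
  let R : Finset (Fin N) → Finset (Finset (Finset (Fin N))) := fun B =>
    if 1 < B.card then (Finset.univ.filter (IsPart B)).erase {B} else {{B}}
  let v : Finset (Fin N) → ℕ → ℂ := fun B d => if 1 < B.card then u B d else 1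
  have hRp : ∀ B ∈ P, ∀ ρ ∈ R B, IsPart B ρ := by
    intro B hB ρ hρ
    simp only [R] at hρ
    split_ifs at hρ with h
    · simpa using (Finset.mem_erase.1 hρ).2
    · rw [Finset.mem_singleton.1 hρ]; exact isPart_single (hP.1 B hB)
  have hRn : ∀ B ∈ P, ∀ ρ ∈ R B, B ∈ ρ → B.card ≤ 1 := by
    intro B hB ρ hρ hBρ
    by_contra hlt
    push Not at hlt
    have h1 := (hRp B hB ρ hρ).eq_single hBρ
    simp [R, hlt, h1] at hρ
  have hW : ∀ B ∈ P, W B = ∑ ρ ∈ R B, v B ρ.card * ∏ C ∈ ρ, W C := by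
    intro B hB
    by_cases h : 1 < B.card
    · simp only [R, v, h, if_true]
      exact Wrec B (hP.2.1 B hB) h
    · simp [R, v, h]
  rw [Finset.prod_congr rfl hW, Finset.prod_sum]
  symm
  refine Finset.sum_bij' (i := fun Q _ => fun B _ => Q.filter (fun C => C ⊆ B))
    (j := fun g _ => P.attach.biUnion (fun B => g B.1 B.2)) ?_ ?_ ?_ ?_ ?_
  · intro Q hQ
    simp only [Finset.mem_filter, Finset.mem_univ, true_and] at hQ
    obtain ⟨_, hQ, _, hr, hc⟩ := hQ
    rw [Finset.mem_pi]
    intro B hB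
    have hp := restrict_isPart hP hQ hr hB
    by_cases h : 1 < B.card
    · simp only [R, h, if_true, Finset.mem_erase, Finset.mem_filter, Finset.mem_univ, true_and]
      refine ⟨fun he => ?_, hp⟩
      have : B ∈ Q.filter (fun C => C ⊆ B) := by rw [he]; simp
      have := hc B hB (Finset.mem_filter.1 this).1
      omega
    · simp only [R, h, if_false, Finset.mem_singleton]
      apply hp.eq_single
      obtain ⟨i, hi⟩ := hP.1 B hB
      obtain ⟨C, ⟨hC, hiC⟩, _⟩ := hp.2.2 i hi
      have hCB := (Finset.mem_filter.1 hC).2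
      have : C = B := Finset.eq_of_subset_of_card_le hCB (by
        have := Finset.card_pos.2 ⟨i, hiC⟩
        omega)
      rwa [this] at hC
  · intro g hg
    rw [Finset.mem_pi] at hg
    simp only [Finset.mem_filter, Finset.mem_univ, true_and]
    have hm : ∀ C, C ∈ P.attach.biUnion (fun B => g B.1 B.2) ↔ ∃ B, ∃ hB : B ∈ P, C ∈ g B hB := by
      intro C; simp
    have hsub : ∀ B (hB : B ∈ P), ∀ C ∈ g B hB, C ⊆ B := fun B hB C hC =>
      (hRp B hB _ (hg B hB)).2.1 C hC
    refine ⟨hP, ⟨?_, ?_, ?_⟩, hPd, ?_, ?_⟩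
    · intro C hC
      obtain ⟨B, hB, hC⟩ := (hm C).1 hC
      exact (hRp B hB _ (hg B hB)).1 C hC
    · intro C hC
      obtain ⟨B, hB, hC⟩ := (hm C).1 hC
      exact (hsub B hB C hC).trans (hP.2.1 B hB)
    · intro i hi
      obtain ⟨B, ⟨hB, hiB⟩, _⟩ := hP.2.2 i hi
      obtain ⟨C, ⟨hC, hiC⟩, _⟩ := (hRp B hB _ (hg B hB)).2.2 i hiB
      refine ⟨C, ⟨(hm C).2 ⟨B, hB, hC⟩, hiC⟩, ?_⟩
      rintro D ⟨hD, hiD⟩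
      obtain ⟨B', hB', hD⟩ := (hm D).1 hD
      have : B' = B := hP.eq_of_mem hB' hB (hsub B' hB' D hD hiD) hiB
      subst this
      exact (hRp B' hB _ (hg B' hB)).eq_of_mem hD hC hiD hiC
    · intro C hC
      obtain ⟨B, hB, hC⟩ := (hm C).1 hC
      exact ⟨B, hB, hsub B hB C hC⟩
    · intro B hB hBQ
      obtain ⟨D, hD, hBD⟩ := (hm B).1 hBQ
      obtain ⟨i, hi⟩ := hP.1 B hB
      have : D = B := hP.eq_of_mem hD hB (hsub D hD B hBD hi) hi
      subst this
      exact hRn D hD _ (hg D hD) hBD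
  · intro Q hQ
    simp only [Finset.mem_filter, Finset.mem_univ, true_and] at hQ
    obtain ⟨_, hQ, _, hr, hc⟩ := hQ
    ext C
    simp only [Finset.mem_biUnion, Finset.mem_attach, true_and, Subtype.exists, Finset.mem_filter]
    constructor
    · rintro ⟨B, hB, h, _⟩; exact h
    · intro hC
      obtain ⟨B, hB, h⟩ := hr C hC
      exact ⟨B, hB, hC, h⟩
  · intro g hg
    rw [Finset.mem_pi] at hg
    have hsub : ∀ B (hB : B ∈ P), ∀ C ∈ g B hB, C ⊆ B := fun B hB C hC =>
      (hRp B hB _ (hg B hB)).2.1 C hC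
    funext B hB
    ext C
    simp only [Finset.mem_biUnion, Finset.mem_attach, true_and, Subtype.exists, Finset.mem_filter]
    constructor
    · rintro ⟨⟨D, hD, hC⟩, hCB⟩
      obtain ⟨i, hi⟩ := (hRp D hD _ (hg D hD)).1 C hC
      have : D = B := hP.eq_of_mem hD hB (hsub D hD C hC hi) (hCB hi)
      subst this
      exact hC
    · intro hC
      exact ⟨⟨B, hB, hC⟩, hsub B hB C hC⟩
  · intro Q hQ
    simp only [Finset.mem_filter, Finset.mem_univ, true_and] at hQ
    obtain ⟨_, hQ, _, hr, hc⟩ := hQ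
    rw [Finset.prod_attach P (fun B => v B (Q.filter (fun C => C ⊆ B)).card *
      ∏ C ∈ Q.filter (fun C => C ⊆ B), W C), Finset.prod_mul_distrib]
    congr 1
    · rw [wgt, Finset.prod_filter]
    · rw [← Finset.prod_biUnion]
      · refine Finset.prod_congr ?_ fun _ _ => rfl
        ext C
        simp only [Finset.mem_biUnion, Finset.mem_filter]
        constructor
        · intro hC
          obtain ⟨B, hB, h⟩ := hr C hC
          exact ⟨B, hB, hC, h⟩
        · rintro ⟨B, hB, h, _⟩; exact h
      · intro B hB B' hB' hne
        simp only [Function.onFun]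
        rw [Finset.disjoint_left]
        intro C hC hC'
        obtain ⟨i, hi⟩ := hQ.1 C (Finset.mem_filter.1 hC).1
        exact hne (hP.eq_of_mem hB hB' ((Finset.mem_filter.1 hC).2 hi)
          ((Finset.mem_filter.1 hC').2 hi))

end LogCoulomb

namespace LogCoulomb

variable {N : ℕ}

theorem SplChain.isPart {I : Finset (Fin N)} (S : SplChain N I) {l : ℕ} (hl : l ≤ S.L) :
    IsPart I (S.Λ l) :=
  ⟨S.nonempty_mem l hl, S.subset_mem l hl, S.cover l hl⟩

theorem SplChain.mem_branches {I : Finset (Fin N)} (S : SplChain N I) {lam : Finset (Fin N)} :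
    lam ∈ S.branches ↔ ∃ l < S.L, lam ∈ S.Λ l ∧ 1 < lam.card := by
  simp only [SplChain.branches, Finset.mem_sdiff, Finset.mem_biUnion, Finset.mem_range]
  constructor
  · rintro ⟨⟨l, hl, hlam⟩, hd⟩
    refine ⟨l, hl, hlam, ?_⟩
    by_contra hc
    have hne := S.nonempty_mem l hl.le lam hlam
    have h1 : lam.card = 1 := by
      have := Finset.card_pos.2 hne
      omega
    obtain ⟨i, rfl⟩ := Finset.card_eq_one.1 h1
    apply hd
    rw [S.last, Finset.mem_image]
    exact ⟨i, S.subset_mem l hl.le _ hlam (by simp), rfl⟩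
  · rintro ⟨l, hl, hlam, hc⟩
    refine ⟨⟨l, hl, hlam⟩, fun h => ?_⟩
    rw [S.last] at h
    have := card_of_mem_disc h
    omega

theorem SplChain.step_of_reduced {I : Finset (Fin N)} (S : SplChain N I) (hS : S.Reduced)
    {l : ℕ} (hl : l < S.L) : Stp I (S.Λ l) (S.Λ (l+1)) := by
  refine ⟨S.isPart hl.le, S.isPart hl, fun hd => ?_, S.refines l hl, fun B hB hB' => ?_⟩
  · apply S.strict l hl
    rw [hd]
    apply (S.isPart hl).eq_disc
    intro B hB
    obtain ⟨C, hC, hBC⟩ := S.refines l hl B hB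
    rw [hd] at hC
    exact (Finset.card_le_card hBC).trans (card_of_mem_disc hC).le
  · by_contra hc
    have hb := S.mem_branches.2 ⟨l, hl, hB, by omega⟩
    have h1 := (hS B hb l hl.le).1 hB
    have h2 := (hS B hb (l+1) hl).1 hB'
    omega

theorem chain_refines {I : Finset (Fin N)} {L : ℕ} {Λ : ℕ → Finset (Finset (Fin N))}
    (h : ∀ l < L, Stp I (Λ l) (Λ (l+1))) (l d : ℕ) (hd : l + d ≤ L) :
    ∀ B ∈ Λ (l + d), ∃ C ∈ Λ l, B ⊆ C := by
  induction d with
  | zero => intro B hB; exact ⟨B, hB, subset_rfl⟩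
  | succ d ih =>
    intro B hB
    obtain ⟨C, hC, hBC⟩ := (h (l+d) (by omega)).2.2.2.1 B hB
    obtain ⟨D, hD, hCD⟩ := ih (by omega) C hC
    exact ⟨D, hD, hBC.trans hCD⟩

theorem chain_uniq {I : Finset (Fin N)} {L : ℕ} {Λ : ℕ → Finset (Finset (Fin N))}
    (h : ∀ l < L, Stp I (Λ l) (Λ (l+1))) {l m : ℕ} (hlm : l < m) (hm : m ≤ L)
    {B : Finset (Fin N)} (hB : B ∈ Λ l) (hB' : B ∈ Λ m) : B.card ≤ 1 := by
  obtain ⟨d, rfl⟩ : ∃ d, m = (l + 1) + d := ⟨m - (l+1), by omega⟩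
  obtain ⟨C, hC, hBC⟩ := chain_refines h (l+1) d hm B hB'
  have hs := h l (by omega)
  obtain ⟨i, hi⟩ := hs.1.1 B hB
  have hCB := sub_of_refines hs.1 hs.2.2.2.1 hB hC hi (hBC hi)
  have : C = B := Finset.Subset.antisymm hCB hBC
  subst this
  exact hs.2.2.2.2 C hB hC

theorem chains_bij {I : Finset (Fin N)} :
    Set.BijOn (fun S : SplChain N I => (S.L, S.Λ)) {S | S.Reduced}
      (Ch (Stp I) (disc I) ∅ {I}) := by
  refine ⟨?_, ?_, ?_⟩
  · intro S hS
    exact ⟨S.first, S.last, fun l hl => S.step_of_reduced hS hl, S.trailing⟩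
  · rintro ⟨⟩ _ ⟨⟩ _ h
    simp only [Prod.mk.injEq] at h
    obtain ⟨rfl, rfl⟩ := h
    rfl
  · rintro ⟨L, Λ⟩ ⟨h0, h1, h2, h3⟩
    simp only at h0 h1 h2 h3
    have hp : ∀ l ≤ L, IsPart I (Λ l) := by
      intro l hl
      rcases hl.eq_or_lt with rfl | hl
      · rw [h1]; exact isPart_disc I
      · exact (h2 l hl).1
    let S : SplChain N I :=
      { L := L
        Λ := Λ
        nonempty_mem := fun l hl => (hp l hl).1
        subset_mem := fun l hl => (hp l hl).2.1
        cover := fun l hl => (hp l hl).2.2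
        first := h0
        last := h1
        refines := fun l hl => (h2 l hl).2.2.2.1
        strict := fun l hl he => (h2 l hl).2.2.1
          ((hp l hl.le).eq_disc fun B hB => (h2 l hl).2.2.2.2 B hB (he ▸ hB))
        trailing := h3 }
    refine ⟨S, ?_, rfl⟩
    intro lam hlam l hl
    obtain ⟨m, hm, hlm, hc⟩ := S.mem_branches.1 hlam
    have huniq : ∀ k ≤ L, lam ∈ Λ k → k = m := by
      intro k hk hlk
      rcases lt_trichotomy k m with hkm | hkm | hkm
      · have := chain_uniq h2 hkm hm.le hlk hlm; omega
      · exact hkm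
      · have := chain_uniq h2 hkm hk hlm hlk; omega
    have hdep : S.depth lam = m := by
      have : (Finset.range (S.L + 1)).filter (fun ℓ => lam ∈ S.Λ ℓ) = {m} := by
        ext k
        simp only [Finset.mem_filter, Finset.mem_range, Finset.mem_singleton]
        constructor
        · rintro ⟨hk, h⟩; exact huniq k (Nat.lt_succ_iff.1 hk) h
        · rintro rfl; exact ⟨by omega, hlm⟩
      rw [SplChain.depth, this]
      simp
    rw [hdep]
    exact ⟨huniq l hl, fun h => h ▸ hlm⟩

theorem chain_weight {I : Finset (Fin N)} (S : SplChain N I) (hS : S.Reduced)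
    (u : Finset (Fin N) → ℕ → ℂ) :
    ∏ lam ∈ S.branches, u lam (S.degree lam) =
      ∏ l ∈ Finset.range S.L, wgt u (S.Λ l) (S.Λ (l+1)) := by
  have hb : S.branches = (Finset.range S.L).biUnion
      (fun l => (S.Λ l).filter (fun B => 1 < B.card)) := by
    ext lam
    rw [S.mem_branches]
    simp
  rw [hb, Finset.prod_biUnion]
  · refine Finset.prod_congr rfl fun l hl => ?_
    rw [wgt]
    refine Finset.prod_congr rfl fun B hB => ?_
    rw [Finset.mem_filter] at hB
    rw [Finset.mem_range] at hl
    have hd := (hS B (S.mem_branches.2 ⟨l, hl, hB⟩) l hl.le).1 hB.1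
    rw [SplChain.degree, ← hd]
  · intro l hl m hm hne
    simp only [Function.onFun]
    rw [Finset.disjoint_left]
    intro B hB hB'
    simp only [Finset.coe_range, Set.mem_Iio] at hl hm
    rw [Finset.mem_filter] at hB hB'
    have hbr := S.mem_branches.2 ⟨l, hl, hB⟩
    exact hne (((hS B hbr l hl.le).1 hB.1).trans ((hS B hbr m hm.le).1 hB'.1).symm)

open Classical in
theorem chains_eq (I : Finset (Fin N)) (hI : I.Nonempty) (u : Finset (Fin N) → ℕ → ℂ)
    (W : Finset (Fin N) → ℂ) (W1 : ∀ B, B.card = 1 → W B = 1)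
    (Wrec : ∀ B ⊆ I, 1 < B.card → W B =
      ∑ ρ ∈ (Finset.univ.filter (IsPart B)).erase {B}, u B ρ.card * ∏ C ∈ ρ, W C) :
    ∑ᶠ S ∈ {S : SplChain N I | S.Reduced}, ∏ lam ∈ S.branches, u lam (S.degree lam) = W I := by
  have h := (chain_sum (Stp I) (disc I) ∅ (wgt u) rnk (fun x y h => rnk_lt h)
    (fun y h => h.2.2.1 rfl) (fun P => ∏ B ∈ P, W B) (IsPart I) (fun x y h => h.2.1)
    (Finset.prod_eq_one fun B hB => W1 B (card_of_mem_disc hB))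
    (fun P hP hPd => by
      rw [prod_step I u W Wrec P hP hPd]) {I} (isPart_single hI)).2
  rw [Finset.prod_singleton] at h
  rw [← h]
  exact finsum_mem_eq_of_bijOn _ chains_bij fun S hS => chain_weight S hS u

end LogCoulomb

open MeasureTheory
open scoped ENNReal NNReal
namespace LogCoulomb

section
variable {p : ℕ} [hp : Fact p.Prime]

theorem fin_norm_sub {a b : Fin p} (h : a ≠ b) : ‖((a : ℕ) : ℚ_[p]) - ((b : ℕ) : ℚ_[p])‖ = 1 := by
  have h1 : ¬ ((p : ℤ) ∣ ((a : ℕ) : ℤ) - ((b : ℕ) : ℤ)) := by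
    intro hd
    apply h
    have ha := a.2
    have hb := b.2
    have := Int.eq_zero_of_abs_lt_dvd hd (by rw [abs_lt]; omega)
    ext; omega
  rw [← PadicInt.norm_int_lt_one_iff_dvd] at h1
  have h2 := PadicInt.norm_le_one ((((a : ℕ) : ℤ) - ((b : ℕ) : ℤ) : ℤ) : ℤ_[p])
  have h3 := le_antisymm h2 (not_lt.1 h1)
  rw [← PadicInt.padic_norm_e_of_padicInt] at h3
  rw [← h3]
  push_cast
  rfl

theorem norm_mul_p_lt (y : ℚ_[p]) : ‖(p : ℚ_[p]) * y‖ < 1 ↔ ‖y‖ ≤ 1 := by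
  have hp0 : (0 : ℝ) < p := by exact_mod_cast hp.out.pos
  rw [norm_mul, Padic.norm_p]
  have := Padic.norm_le_pow_iff_norm_lt_pow_add_one y 0
  simp only [zpow_zero, zero_add, zpow_one] at this
  rw [this, inv_mul_lt_iff₀ hp0, mul_one]

theorem exists_fin (x : ℚ_[p]) (hx : ‖x‖ ≤ 1) : ∃ a : Fin p, ‖x - ((a : ℕ) : ℚ_[p])‖ < 1 := by
  obtain ⟨z, rfl⟩ : ∃ z : ℤ_[p], (z : ℚ_[p]) = x := ⟨⟨x, hx⟩, rfl⟩
  obtain ⟨n, hn, h⟩ := PadicInt.exists_mem_range z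
  refine ⟨⟨n, hn⟩, ?_⟩
  rw [PadicInt.maximalIdeal_eq_span_p, Ideal.mem_span_singleton, ← PadicInt.norm_lt_one_iff_dvd,
    ← PadicInt.padic_norm_e_of_padicInt] at h
  simpa using h

theorem measurableSet_Zball : MeasurableSet (Zball p) :=
  (isClosed_le continuous_norm continuous_const).measurableSet

theorem measurableSet_pvball (v : ℤ) : MeasurableSet (pvball p v) :=
  (isClosed_le continuous_norm continuous_const).measurableSet

/-- residue ball -/
def rball (a : Fin p) : Set ℚ_[p] := {x | ‖x - ((a : ℕ) : ℚ_[p])‖ < 1}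

theorem measurableSet_rball (a : Fin p) : MeasurableSet (rball a) :=
  (isOpen_lt (by fun_prop) continuous_const).measurableSet

theorem norm_natCast_le (n : ℕ) : ‖(n : ℚ_[p])‖ ≤ 1 := by
  have h2 := PadicInt.norm_le_one (n : ℤ_[p])
  rwa [← PadicInt.padic_norm_e_of_padicInt] at h2

theorem Zball_eq : Zball p = ⋃ a : Fin p, rball a := by
  ext x
  simp only [Zball, rball, Set.mem_ofPred_eq, Set.mem_iUnion]
  refine ⟨exists_fin x, ?_⟩
  rintro ⟨a, ha⟩
  have := Padic.nonarchimedean (x - ((a : ℕ) : ℚ_[p])) ((a : ℕ) : ℚ_[p])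
  rw [sub_add_cancel] at this
  exact this.trans (max_le ha.le (norm_natCast_le _))

theorem rball_disj : Pairwise (Function.onFun Disjoint (rball (p := p))) := by
  intro a b hab
  simp only [Function.onFun]
  rw [Set.disjoint_left]
  intro x hx hy
  simp only [rball, Set.mem_ofPred_eq] at hx hy
  have h1 := fin_norm_sub hab
  have h2 := Padic.nonarchimedean (-(x - ((a : ℕ) : ℚ_[p]))) (x - ((b : ℕ) : ℚ_[p]))
  have h3 : -(x - ((a : ℕ) : ℚ_[p])) + (x - ((b : ℕ) : ℚ_[p])) =
    ((a : ℕ) : ℚ_[p]) - ((b : ℕ) : ℚ_[p]) := by ring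
  rw [h3, h1, norm_neg] at h2
  exact absurd h2 (not_le.2 (max_lt hx hy))

variable (μ : Measure ℚ_[p]) [μ.IsAddHaarMeasure]

theorem map_mul_exists (c : ℚ_[p]) (hc : c ≠ 0) :
    ∃ k : ℝ≥0, μ.map (fun x => c * x) = (k : ℝ≥0∞) • μ := by
  have : (μ.map (fun x => c * x)).IsAddHaarMeasure := by
    let e : ℚ_[p] ≃+ ℚ_[p] :=
      { toFun := fun x => c * x
        invFun := fun x => c⁻¹ * x
        left_inv := fun x => by field_simp
        right_inv := fun x => by field_simp
        map_add' := fun x y => mul_add _ _ _ }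
    exact e.isAddHaarMeasure_map μ (continuous_const.mul continuous_id)
      (continuous_const.mul continuous_id)
  exact ⟨_, Measure.isAddLeftInvariant_eq_smul _ μ⟩

theorem map_p (hμ : μ (Zball p) = 1) : μ.map (fun x => (p : ℚ_[p]) * x) = (p : ℝ≥0∞) • μ := by
  have hp0 : (p : ℚ_[p]) ≠ 0 := by exact_mod_cast hp.out.ne_zero
  have hb : ∀ a : Fin p, μ (rball a) = μ {x | ‖x‖ < 1} := by
    intro a
    have : rball a = (fun x => x + (-((a : ℕ) : ℚ_[p]))) ⁻¹' {x | ‖x‖ < 1} := by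
      ext x; simp [rball, sub_eq_add_neg]
    rw [this, measure_preimage_add_right]
  have h1 : (p : ℝ≥0∞) * μ {x : ℚ_[p] | ‖x‖ < 1} = 1 := by
    rw [← hμ, Zball_eq, measure_iUnion rball_disj measurableSet_rball, tsum_fintype]
    simp [hb]
  obtain ⟨k, hk⟩ := map_mul_exists μ (p : ℚ_[p]) hp0
  have h2 : (k : ℝ≥0∞) * μ {x : ℚ_[p] | ‖x‖ < 1} = 1 := by
    have := congrArg (fun m => m {x : ℚ_[p] | ‖x‖ < 1}) hk
    simp only [Measure.smul_apply, smul_eq_mul] at this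
    rw [← this, Measure.map_apply (by fun_prop)
      (isOpen_lt continuous_norm continuous_const).measurableSet, ← hμ]
    congr 1
    ext y
    exact norm_mul_p_lt y
  rw [hk]
  congr 1
  rw [ENNReal.eq_inv_of_mul_eq_one_left h1, ENNReal.eq_inv_of_mul_eq_one_left h2]

theorem measure_pvball (hμ : μ (Zball p) = 1) (v : ℤ) :
    μ (pvball p v) = (p : ℝ≥0∞) ^ (-v) := by
  have hpR : (0 : ℝ) < p := by exact_mod_cast hp.out.pos
  have hpE : (p : ℝ≥0∞) ≠ 0 := by exact_mod_cast hp.out.ne_zero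
  have hpT : (p : ℝ≥0∞) ≠ ∞ := ENNReal.natCast_ne_top p
  have step : ∀ v : ℤ, μ (pvball p v) = p * μ (pvball p (v+1)) := by
    intro v
    have := congrArg (fun m => m (pvball p (v+1))) (map_p μ hμ)
    simp only [Measure.smul_apply, smul_eq_mul] at this
    rw [← this, Measure.map_apply (by fun_prop) (measurableSet_pvball _)]
    congr 1
    ext y
    simp only [pvball, Set.mem_ofPred_eq, Set.mem_preimage, norm_mul, Padic.norm_p]
    rw [inv_mul_le_iff₀ hpR, neg_add, zpow_add₀ hpR.ne']
    congr! 1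
    field_simp
  have h0 : pvball p 0 = Zball p := by
    ext; simp [pvball, Zball]
  induction v using Int.induction_on with
  | zero => rw [h0, hμ]; simp
  | succ n ih =>
    rw [step] at ih
    have : (p : ℝ≥0∞) ^ (-(n : ℤ)) = p * p ^ (-((n : ℤ) + 1)) := by
      rw [neg_add, ENNReal.zpow_add hpE hpT, mul_left_comm]
      rw [ENNReal.zpow_neg _ 1, zpow_one, ENNReal.mul_inv_cancel hpE hpT, mul_one]
    rw [this] at ih
    exact (ENNReal.mul_right_inj hpE hpT).1 ih
  | pred n ih =>
    rw [step, sub_add_cancel, ih, neg_sub, sub_neg_eq_add, add_comm, neg_neg,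
      ENNReal.zpow_add hpE hpT, mul_comm]
    simp [mul_comm]

theorem restrict_pvball (hμ : μ (Zball p) = 1) (v : ℤ) :
    μ.restrict (pvball p v) = (p : ℝ≥0∞) ^ (-v) •
      (μ.restrict (Zball p)).map (fun x => (p : ℚ_[p]) ^ v * x) := by
  have hpR : (0 : ℝ) < p := by exact_mod_cast hp.out.pos
  have hpE : (p : ℝ≥0∞) ≠ 0 := by exact_mod_cast hp.out.ne_zero
  have hpT : (p : ℝ≥0∞) ≠ ∞ := ENNReal.natCast_ne_top p
  have hp0 : (p : ℚ_[p]) ≠ 0 := by exact_mod_cast hp.out.ne_zero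
  have hpre : (fun x => (p : ℚ_[p]) ^ v * x) ⁻¹' (pvball p v) = Zball p := by
    ext y
    simp only [pvball, Zball, Set.mem_ofPred_eq, Set.mem_preimage, norm_mul, norm_zpow,
      Padic.norm_p, inv_zpow', ]
    exact mul_le_iff_le_one_right (zpow_pos hpR _)
  obtain ⟨k, hk⟩ := map_mul_exists μ ((p : ℚ_[p]) ^ v) (zpow_ne_zero _ hp0)
  have h1 : (k : ℝ≥0∞) * (p : ℝ≥0∞) ^ (-v) = 1 := by
    have := congrArg (fun m => m (pvball p v)) hk
    simp only [Measure.smul_apply, smul_eq_mul] at this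
    rw [Measure.map_apply (by fun_prop) (measurableSet_pvball _), hpre, hμ,
      measure_pvball μ hμ] at this
    exact this.symm
  rw [← hpre, ← Measure.restrict_map (by fun_prop) (measurableSet_pvball v), hk,
    Measure.restrict_smul, smul_smul, mul_comm, h1, one_smul]

/-- The uniform measure on residues -/
noncomputable def unif (p : ℕ) : Measure (Fin p) := (p : ℝ≥0∞)⁻¹ • Measure.count

instance : IsProbabilityMeasure (unif p) := by
  have hpE : (p : ℝ≥0∞) ≠ 0 := by exact_mod_cast hp.out.ne_zero
  constructor
  simp [unif, Measure.count_univ, ENNReal.inv_mul_cancel hpE (ENNReal.natCast_ne_top p)]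

theorem unif_singleton (a : Fin p) : unif p {a} = (p : ℝ≥0∞)⁻¹ := by
  simp [unif]

theorem measurable_combine :
    Measurable (fun q : Fin p × ℚ_[p] => ((q.1 : ℕ) : ℚ_[p]) + (p : ℚ_[p]) * q.2) := by
  apply measurable_from_prod_countable_right
  intro a
  fun_prop

theorem restrict_decomp (hμ : μ (Zball p) = 1) :
    ((unif p).prod (μ.restrict (Zball p))).map
      (fun q : Fin p × ℚ_[p] => ((q.1 : ℕ) : ℚ_[p]) + (p : ℚ_[p]) * q.2) =
      μ.restrict (Zball p) := by
  have hpE : (p : ℝ≥0∞) ≠ 0 := by exact_mod_cast hp.out.ne_zero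
  have hpT : (p : ℝ≥0∞) ≠ ∞ := ENNReal.natCast_ne_top p
  ext S hS
  rw [Measure.map_apply measurable_combine hS, Measure.prod_apply (measurable_combine hS),
    lintegral_fintype]
  have h1 : ∀ a : Fin p, (μ.restrict (Zball p)) (Prod.mk a ⁻¹'
      ((fun q : Fin p × ℚ_[p] => ((q.1 : ℕ) : ℚ_[p]) + (p : ℚ_[p]) * q.2) ⁻¹' S)) * unif p {a} =
      μ (S ∩ rball a) := by
    intro a
    rw [unif_singleton]
    have hm : Measurable fun y : ℚ_[p] => ((a : ℕ) : ℚ_[p]) + (p : ℚ_[p]) * y := by fun_prop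
    rw [Measure.restrict_apply (by exact hm hS)]
    have h2 : (Prod.mk a ⁻¹'
      ((fun q : Fin p × ℚ_[p] => ((q.1 : ℕ) : ℚ_[p]) + (p : ℚ_[p]) * q.2) ⁻¹' S)) ∩ Zball p =
      (fun y => (p : ℚ_[p]) * y) ⁻¹' ((fun x => ((a : ℕ) : ℚ_[p]) + x) ⁻¹' (S ∩ rball a)) := by
      ext y
      simp only [Set.mem_inter_iff, Set.mem_preimage, Zball, rball, Set.mem_ofPred_eq,
        add_sub_cancel_left, norm_mul_p_lt]
    rw [h2, ← Measure.map_apply (by fun_prop), map_p μ hμ, Measure.smul_apply,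
      measure_preimage_add, smul_eq_mul, mul_right_comm, ENNReal.mul_inv_cancel hpE hpT, one_mul]
    exact (measurable_const_add _) (hS.inter (measurableSet_rball a))
  simp_rw [h1]
  rw [Measure.restrict_apply hS, Zball_eq, Set.inter_iUnion, measure_iUnion, tsum_fintype]
  · intro a b hab
    exact (rball_disj hab).mono Set.inter_subset_right Set.inter_subset_right
  · exact fun a => hS.inter (measurableSet_rball a)

end
end LogCoulomb

open MeasureTheory
open scoped ENNReal NNReal
namespace LogCoulomb

section
variable {p : ℕ} [hp : Fact p.Prime] {N : ℕ}

/-- digit map -/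
noncomputable def comb (f : Fin N → Fin p) (y : Fin N → ℚ_[p]) : Fin N → ℚ_[p] :=
  fun i => ((f i : ℕ) : ℚ_[p]) + (p : ℚ_[p]) * y i

theorem measurable_comb2 :
    Measurable (fun q : (Fin N → Fin p) × (Fin N → ℚ_[p]) => comb q.1 q.2) := by
  apply measurable_from_prod_countable_right
  intro a
  unfold comb
  fun_prop

theorem measurable_comb (f : Fin N → Fin p) : Measurable (comb f) := by
  unfold comb
  fun_prop

/-- self-similarity of a measure -/
structure SelfSim (ν : Measure ℚ_[p]) : Prop where
  prob : IsProbabilityMeasure ν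
  dec : ((unif p).prod ν).map
      (fun q : Fin p × ℚ_[p] => ((q.1 : ℕ) : ℚ_[p]) + (p : ℚ_[p]) * q.2) = ν
  le : ∀ᵐ x ∂ν, ‖x‖ ≤ 1

variable {ν : Measure ℚ_[p]} [IsProbabilityMeasure ν] (hν : SelfSim ν)
include hν

theorem pi_decomp :
    ((Measure.pi fun _ : Fin N => unif p).prod (Measure.pi fun _ : Fin N => ν)).map
      (fun q => comb q.1 q.2) = Measure.pi fun _ : Fin N => ν := by
  have h1 := (measurePreserving_arrowProdEquivProdArrow (Fin p) ℚ_[p] (Fin N)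
    (fun _ => unif p) (fun _ => ν)).map_eq
  rw [← h1, Measure.map_map measurable_comb2 (MeasurableEquiv.measurable _)]
  conv_rhs => rw [← hν.dec]
  have : IsProbabilityMeasure (((unif p).prod ν).map
      (fun q : Fin p × ℚ_[p] => ((q.1 : ℕ) : ℚ_[p]) + (p : ℚ_[p]) * q.2)) := by
    rw [hν.dec]; infer_instance
  rw [← Measure.pi_map_pi (fun _ => measurable_combine.aemeasurable)]
  rfl

omit hν in
theorem pi_unif_singleton (f : Fin N → Fin p) :
    (Measure.pi fun _ : Fin N => unif p) {f} = ((p : ℝ≥0∞)⁻¹) ^ N := by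
  rw [Measure.pi_singleton]; simp [unif_singleton]

theorem lintegral_decomp (g : (Fin N → ℚ_[p]) → ℝ≥0∞) (hg : Measurable g) :
    ∫⁻ x, g x ∂(Measure.pi fun _ : Fin N => ν) = ((p : ℝ≥0∞)⁻¹) ^ N *
      ∑ f : Fin N → Fin p, ∫⁻ y, g (comb f y) ∂(Measure.pi fun _ : Fin N => ν) := by
  conv_lhs => rw [← pi_decomp hν]
  rw [lintegral_map hg measurable_comb2,
    lintegral_prod (fun q : (Fin N → Fin p) × (Fin N → ℚ_[p]) => g (comb q.1 q.2)) (hg.comp measurable_comb2).aemeasurable, lintegral_fintype, Finset.mul_sum]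
  refine Finset.sum_congr rfl fun f _ => ?_
  rw [pi_unif_singleton, mul_comm]

theorem integral_decomp (g : (Fin N → ℚ_[p]) → ℂ) (hg : Measurable g)
    (hi : Integrable g (Measure.pi fun _ : Fin N => ν)) :
    ∫ x, g x ∂(Measure.pi fun _ : Fin N => ν) = ((p : ℂ)⁻¹) ^ N *
      ∑ f : Fin N → Fin p, ∫ y, g (comb f y) ∂(Measure.pi fun _ : Fin N => ν) := by
  have hi' : Integrable (fun q : (Fin N → Fin p) × (Fin N → ℚ_[p]) => g (comb q.1 q.2))
      ((Measure.pi fun _ : Fin N => unif p).prod (Measure.pi fun _ : Fin N => ν)) := by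
    rw [← pi_decomp hν] at hi
    exact hi.comp_measurable measurable_comb2
  conv_lhs => rw [← pi_decomp hν]
  rw [integral_map measurable_comb2.aemeasurable hg.aestronglyMeasurable,
    integral_prod _ hi', integral_fintype, Finset.mul_sum]
  · refine Finset.sum_congr rfl fun f _ => ?_
    rw [Measure.real, pi_unif_singleton]
    simp
  · exact Integrable.of_finite

theorem integrable_comb (g : (Fin N → ℚ_[p]) → ℂ) (hg : Measurable g)
    (hi : Integrable g (Measure.pi fun _ : Fin N => ν)) (f : Fin N → Fin p) :
    Integrable (fun y => g (comb f y)) (Measure.pi fun _ : Fin N => ν) := by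
  refine ⟨(hg.comp (measurable_comb f)).aestronglyMeasurable, ?_⟩
  have h1 := hi.2
  rw [hasFiniteIntegral_iff_enorm, lintegral_decomp hν _ hg.enorm] at h1
  have hpE : ((p : ℝ≥0∞)⁻¹) ^ N ≠ 0 := by simp
  have h2 : ∑ f : Fin N → Fin p, ∫⁻ y, ‖g (comb f y)‖ₑ ∂(Measure.pi fun _ : Fin N => ν) < ∞ := by
    by_contra h
    rw [not_lt_top_iff] at h
    rw [h, ENNReal.mul_top hpE] at h1
    exact lt_irrefl _ h1
  rw [hasFiniteIntegral_iff_enorm]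
  exact (ENNReal.sum_lt_top.1 h2) f (Finset.mem_univ _)

theorem ae_le_one : ∀ᵐ y ∂(Measure.pi fun _ : Fin N => ν), ∀ i, ‖y i‖ ≤ 1 := by
  rw [ae_all_iff]
  intro i
  exact (Measure.quasiMeasurePreserving_eval (μ := fun _ : Fin N => ν) i).ae hν.le

omit hν in
theorem selfSim_of (μ : Measure ℚ_[p]) [μ.IsAddHaarMeasure] (hμ : μ (Zball p) = 1) :
    SelfSim (μ.restrict (Zball p)) where
  prob := ⟨by simp [hμ]⟩
  dec := restrict_decomp μ hμ
  le := ae_restrict_mem measurableSet_Zball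

end
end LogCoulomb

open MeasureTheory
open scoped ENNReal NNReal
namespace LogCoulomb

section
variable {p : ℕ} [hp : Fact p.Prime] {N : ℕ}
variable {ν : Measure ℚ_[p]} [IsProbabilityMeasure ν]

open Classical in
/-- extension by zero -/
noncomputable def extz (S : Finset (Fin N)) (z : S → ℚ_[p]) : Fin N → ℚ_[p] :=
  fun i => if h : i ∈ S then z ⟨i, h⟩ else 0

theorem measurable_extz (S : Finset (Fin N)) : Measurable (extz (p := p) S) := by
  refine measurable_pi_lambda _ fun i => ?_
  unfold extz
  by_cases h : i ∈ S
  · simp only [h, dite_true]; fun_prop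
  · simp only [h, dite_false]; fun_prop

theorem dep_eq {β : Type*} {g : (Fin N → ℚ_[p]) → β} {S : Finset (Fin N)}
    (h : DependsOn g (S : Set (Fin N))) (x : Fin N → ℚ_[p]) :
    g (extz S (fun i => x i)) = g x := by
  apply h
  intro i hi
  simp [extz, Finset.mem_coe.1 hi]

theorem indep_dep {β γ : Type*} [MeasurableSpace β] [MeasurableSpace γ]
    {g : (Fin N → ℚ_[p]) → β} {h : (Fin N → ℚ_[p]) → γ} {S T : Finset (Fin N)}
    (hg : Measurable g) (hh : Measurable h)
    (hS : DependsOn g (S : Set (Fin N))) (hT : DependsOn h (T : Set (Fin N)))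
    (hd : Disjoint S T) :
    ProbabilityTheory.IndepFun g h (Measure.pi fun _ : Fin N => ν) := by
  have h1 : ProbabilityTheory.iIndepFun (fun (i : Fin N) (x : Fin N → ℚ_[p]) => x i)
      (Measure.pi fun _ : Fin N => ν) :=
    ProbabilityTheory.iIndepFun_pi (X := fun _ : Fin N => (id : ℚ_[p] → ℚ_[p]))
      (fun _ => aemeasurable_id)
  have h2 := h1.indepFun_finset S T hd (fun i => measurable_pi_apply i)
  have h3 := h2.comp (hg.comp (measurable_extz S)) (hh.comp (measurable_extz T))
  convert h3 using 1
  · funext x; exact (dep_eq hS x).symm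
  · funext x; exact (dep_eq hT x).symm

theorem dep_prod {M : Type*} [CommMonoid M] {ι : Type*} [DecidableEq ι] {g : ι → (Fin N → ℚ_[p]) → M}
    {S : ι → Finset (Fin N)} (h : ∀ c, DependsOn (g c) (S c : Set (Fin N))) (A : Finset ι) :
    DependsOn (fun x => ∏ c ∈ A, g c x) ((A.biUnion S : Finset (Fin N)) : Set (Fin N)) := by
  intro x y hxy
  refine Finset.prod_congr rfl fun c hc => h c fun i hi => hxy i ?_
  simp only [Finset.coe_biUnion, Set.mem_iUnion]
  exact ⟨c, hc, hi⟩

theorem lintegral_prod_dep {ι : Type*} [DecidableEq ι] {g : ι → (Fin N → ℚ_[p]) → ℝ≥0∞}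
    {S : ι → Finset (Fin N)} (hg : ∀ c, Measurable (g c))
    (h : ∀ c, DependsOn (g c) (S c : Set (Fin N)))
    (hd : ∀ c d, c ≠ d → Disjoint (S c) (S d)) (A : Finset ι) :
    ∫⁻ x, ∏ c ∈ A, g c x ∂(Measure.pi fun _ : Fin N => ν) =
      ∏ c ∈ A, ∫⁻ x, g c x ∂(Measure.pi fun _ : Fin N => ν) := by
  induction A using Finset.induction_on with
  | empty => simp
  | insert c A hc ih =>
    simp only [Finset.prod_insert hc]
    rw [← ih]
    refine ProbabilityTheory.lintegral_mul_eq_lintegral_mul_lintegral_of_indepFun'' (hg c).aemeasurable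
      (Finset.measurable_prod A fun c _ => hg c).aemeasurable
      (indep_dep (hg c) (Finset.measurable_prod A fun c _ => hg c) (h c) (dep_prod h A) ?_)
    rw [Finset.disjoint_biUnion_right]
    intro d hdA
    exact hd c d (by rintro rfl; exact hc hdA)

theorem integral_prod_dep {ι : Type*} [DecidableEq ι] {g : ι → (Fin N → ℚ_[p]) → ℂ}
    {S : ι → Finset (Fin N)} (hg : ∀ c, Measurable (g c))
    (h : ∀ c, DependsOn (g c) (S c : Set (Fin N)))
    (hd : ∀ c d, c ≠ d → Disjoint (S c) (S d)) (A : Finset ι) :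
    ∫ x, ∏ c ∈ A, g c x ∂(Measure.pi fun _ : Fin N => ν) =
      ∏ c ∈ A, ∫ x, g c x ∂(Measure.pi fun _ : Fin N => ν) := by
  induction A using Finset.induction_on with
  | empty => simp
  | insert c A hc ih =>
    simp only [Finset.prod_insert hc]
    rw [← ih]
    refine ProbabilityTheory.IndepFun.integral_fun_mul_eq_mul_integral
      (indep_dep (hg c) (Finset.measurable_prod A fun c _ => hg c) (h c) (dep_prod h A) ?_)
      (hg c).aestronglyMeasurable
      (Finset.measurable_prod A fun c _ => hg c).aestronglyMeasurable
    rw [Finset.disjoint_biUnion_right]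
    intro d hdA
    exact hd c d (by rintro rfl; exact hc hdA)

end

section
variable {p : ℕ} [hp : Fact p.Prime] {N : ℕ}

/-- pairs inside I -/
def PI (I : Finset (Fin N)) : Finset (Fin N × Fin N) :=
  (pairs N).filter fun q => q.1 ∈ I ∧ q.2 ∈ I

/-- exponent sum -/
noncomputable def SS (s : Fin N → Fin N → ℂ) (I : Finset (Fin N)) : ℂ := ∑ q ∈ PI I, s q.1 q.2

/-- integrand -/
noncomputable def phi (s : Fin N → Fin N → ℂ) (I : Finset (Fin N)) (x : Fin N → ℚ_[p]) : ℂ :=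
  ∏ q ∈ PI I, (‖x q.1 - x q.2‖ : ℂ) ^ s q.1 q.2

/-- normalized integrand -/
noncomputable def psi (s : Fin N → Fin N → ℂ) (I : Finset (Fin N)) (x : Fin N → ℚ_[p]) : ℂ :=
  (p : ℂ) ^ (- SS s I) * phi s I x

theorem p_ne : (p : ℂ) ≠ 0 := by exact_mod_cast hp.out.ne_zero

theorem cpow_sum' {ι : Type*} (A : Finset ι) (g : ι → ℂ) {z : ℂ} (hz : z ≠ 0) :
    z ^ (∑ q ∈ A, g q) = ∏ q ∈ A, z ^ g q := by
  classical
  induction A using Finset.induction_on with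
  | empty => simp
  | insert c A hc ih => rw [Finset.sum_insert hc, Finset.prod_insert hc, Complex.cpow_add _ _ hz, ih]

theorem psi_eq (s : Fin N → Fin N → ℂ) (I : Finset (Fin N)) (x : Fin N → ℚ_[p]) :
    psi s I x = ∏ q ∈ PI I, ((p : ℂ) ^ (- s q.1 q.2) * (‖x q.1 - x q.2‖ : ℂ) ^ s q.1 q.2) := by
  rw [psi, phi, Finset.prod_mul_distrib]
  congr 1
  rw [SS, ← Finset.sum_neg_distrib]
  exact cpow_sum' _ _ p_ne

theorem phi_eq (s : Fin N → Fin N → ℂ) (I : Finset (Fin N)) (x : Fin N → ℚ_[p]) :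
    phi s I x = (p : ℂ) ^ (SS s I) * psi s I x := by
  rw [psi, ← mul_assoc, ← Complex.cpow_add _ _ p_ne]
  simp

theorem measurable_phi (s : Fin N → Fin N → ℂ) (I : Finset (Fin N)) :
    Measurable (phi (p := p) s I) := by
  unfold phi
  fun_prop

theorem measurable_psi (s : Fin N → Fin N → ℂ) (I : Finset (Fin N)) :
    Measurable (psi (p := p) s I) := (measurable_phi s I).const_mul _

theorem dep_phi (s : Fin N → Fin N → ℂ) (I : Finset (Fin N)) :
    DependsOn (phi (p := p) s I) (I : Set (Fin N)) := by
  intro x y h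
  refine Finset.prod_congr rfl fun q hq => ?_
  simp only [PI, Finset.mem_filter] at hq
  rw [h _ hq.2.1, h _ hq.2.2]

theorem dep_psi (s : Fin N → Fin N → ℂ) (I : Finset (Fin N)) :
    DependsOn (psi (p := p) s I) (I : Set (Fin N)) := by
  intro x y h
  rw [psi, psi, dep_phi s I h]

theorem comb_norm_ne {f : Fin N → Fin p} {y : Fin N → ℚ_[p]} (hy : ∀ i, ‖y i‖ ≤ 1) {i j : Fin N}
    (h : f i ≠ f j) : ‖comb f y i - comb f y j‖ = 1 := by
  have h1 := fin_norm_sub h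
  have e : comb f y i - comb f y j = (((f i : ℕ) : ℚ_[p]) - ((f j : ℕ) : ℚ_[p])) +
    (p : ℚ_[p]) * (y i - y j) := by unfold comb; ring
  have h2 : ‖(p : ℚ_[p]) * (y i - y j)‖ < 1 := by
    rw [norm_mul_p_lt]
    have := Padic.nonarchimedean (y i) (-(y j))
    rw [norm_neg, ← sub_eq_add_neg] at this
    exact this.trans (max_le (hy i) (hy j))
  rw [e, Padic.add_eq_max_of_ne (by rw [h1]; exact h2.ne'), h1, max_eq_left h2.le]

theorem comb_norm_eq {f : Fin N → Fin p} {y : Fin N → ℚ_[p]} {i j : Fin N}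
    (h : f i = f j) : ‖comb f y i - comb f y j‖ = (p : ℝ)⁻¹ * ‖y i - y j‖ := by
  have e : comb f y i - comb f y j = (p : ℚ_[p]) * (y i - y j) := by unfold comb; rw [h]; ring
  rw [e, norm_mul, Padic.norm_p]

open Classical in
theorem phi_comb (s : Fin N → Fin N → ℂ) (I : Finset (Fin N)) (f : Fin N → Fin p)
    (y : Fin N → ℚ_[p]) (hy : ∀ i, ‖y i‖ ≤ 1) :
    phi s I (comb f y) = ∏ c : Fin p, psi s (I.filter fun i => f i = c) y := by
  have h1 : ∀ c : Fin p, psi s (I.filter fun i => f i = c) y = ∏ q ∈ PI I,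
      if f q.1 = c ∧ f q.2 = c then
        ((p : ℂ) ^ (- s q.1 q.2) * (‖y q.1 - y q.2‖ : ℂ) ^ s q.1 q.2) else 1 := by
    intro c
    rw [psi_eq, ← Finset.prod_filter]
    refine Finset.prod_congr ?_ fun _ _ => rfl
    ext q
    simp only [PI, Finset.mem_filter]
    tauto
  simp_rw [h1]
  rw [Finset.prod_comm]
  refine Finset.prod_congr rfl fun q _ => ?_
  by_cases h : f q.1 = f q.2
  · rw [comb_norm_eq h]
    rw [Finset.prod_eq_single (f q.1)]
    · rw [if_pos ⟨rfl, h.symm⟩, Complex.ofReal_mul,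
        Complex.mul_cpow_ofReal_nonneg (by positivity) (norm_nonneg _)]
      congr 1
      rw [Complex.ofReal_inv, Complex.ofReal_natCast, Complex.inv_cpow, Complex.cpow_neg]
      rw [Complex.natCast_arg]; exact Real.pi_pos.ne
    · intro c _ hc
      rw [if_neg]
      exact fun h' => hc h'.1.symm
    · simp
  · rw [comb_norm_ne hy h, Complex.ofReal_one, Complex.one_cpow]
    symm
    refine Finset.prod_eq_one fun c _ => if_neg ?_
    exact fun h' => h (h'.1.trans h'.2.symm)

end
end LogCoulomb

open MeasureTheory
open scoped ENNReal NNReal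
namespace LogCoulomb

section
variable {p : ℕ} [hp : Fact p.Prime] {N : ℕ}

/-- absolute normalized integral -/
noncomputable def Lp' (ν : Measure ℚ_[p]) [IsProbabilityMeasure ν] (s : Fin N → Fin N → ℂ) (B : Finset (Fin N)) : ℝ≥0∞ :=
  ∫⁻ x, ‖psi s B x‖ₑ ∂(Measure.pi fun _ : Fin N => ν)

open Classical in
/-- constant term -/
noncomputable def Cc (ν : Measure ℚ_[p]) [IsProbabilityMeasure ν] (s : Fin N → Fin N → ℂ) (I : Finset (Fin N)) : ℝ≥0∞ :=
  ((p : ℝ≥0∞)⁻¹) ^ N * ∑ P ∈ (Finset.univ.filter (IsPart I)).erase {I},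
        ((p ^ (N - I.card) * p.descFactorial P.card : ℕ) : ℝ≥0∞) * ∏ B ∈ P, Lp' ν s B

/-- ratio -/
noncomputable def rr (p : ℕ) (s : Fin N → Fin N → ℂ) (I : Finset (Fin N)) : ℝ≥0∞ :=
  ((p : ℝ≥0∞)⁻¹) ^ N * ((p ^ (N - I.card) * p : ℕ) : ℝ≥0∞) * ‖(p : ℂ) ^ (- SS s I)‖ₑ

theorem psi_small (s : Fin N → Fin N → ℂ) (B : Finset (Fin N)) (h : B.card ≤ 1)
    (x : Fin N → ℚ_[p]) : psi s B x = 1 := by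
  have : PI B = ∅ := by
    rw [Finset.eq_empty_iff_forall_notMem]
    intro q hq
    simp only [PI, pairs, Finset.mem_filter] at hq
    rw [Finset.card_le_one] at h
    exact absurd (h _ hq.2.1 _ hq.2.2) hq.1.2.ne
  rw [psi_eq, this, Finset.prod_empty]

variable {ν : Measure ℚ_[p]} [IsProbabilityMeasure ν]

theorem Lp_small (s : Fin N → Fin N → ℂ) (B : Finset (Fin N)) (h : B.card ≤ 1) :
    Lp' ν s B = 1 := by
  simp [Lp', psi_small s B h]

open Classical in
theorem prod_ite_const {M : Type*} [CommMonoid M] {I : Finset (Fin N)} (hI : I.Nonempty)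
    (f : Fin N → Fin p) (w : M) :
    (∏ c : Fin p, if I.filter (fun i => f i = c) = I then w else 1) =
      if (∀ i ∈ I, ∀ j ∈ I, f i = f j) then w else 1 := by
  obtain ⟨i0, h0⟩ := hI
  split_ifs with h
  · rw [Finset.prod_eq_single (f i0)]
    · rw [if_pos]
      rw [Finset.filter_eq_self]
      exact fun i hi => h i hi i0 h0
    · intro c _ hc
      rw [if_neg]
      rw [Finset.filter_eq_self]
      exact fun h' => hc (h' i0 h0).symm
    · simp
  · refine Finset.prod_eq_one fun c _ => if_neg ?_
    rw [Finset.filter_eq_self]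
    exact fun h' => h fun i hi j hj => (h' i hi).trans (h' j hj).symm

theorem enorm_prod' {ι : Type*} (A : Finset ι) (g : ι → ℂ) :
    ‖∏ c ∈ A, g c‖ₑ = ∏ c ∈ A, ‖g c‖ₑ := by
  classical
  induction A using Finset.induction_on with
  | empty => simp
  | insert c A hc ih => rw [Finset.prod_insert hc, Finset.prod_insert hc, enorm_mul, ih]

open Classical in
/-- weighted absolute integral -/
noncomputable def Hw (ν : Measure ℚ_[p]) [IsProbabilityMeasure ν] (s : Fin N → Fin N → ℂ)
    (I : Finset (Fin N)) (w : (Fin N → ℚ_[p]) → ℝ≥0∞) (B : Finset (Fin N)) : ℝ≥0∞ :=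
  ∫⁻ x, (if B = I then w x else 1) * ‖psi s B x‖ₑ ∂(Measure.pi fun _ : Fin N => ν)

open Classical in
theorem lint_fib (hν : SelfSim ν) (s : Fin N → Fin N → ℂ) (I : Finset (Fin N)) (hI : I.Nonempty)
    (w w' : (Fin N → ℚ_[p]) → ℝ≥0∞) (hw : Measurable w) (hw' : Measurable w')
    (hd : DependsOn w (I : Set (Fin N)))
    (hww : ∀ f y, (∀ i, ‖y i‖ ≤ 1) → w' (comb f y) =
      if (∀ i ∈ I, ∀ j ∈ I, f i = f j) then w y else 1) :
    ∫⁻ x, w' x * ‖phi s I x‖ₑ ∂(Measure.pi fun _ : Fin N => ν) =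
      ((p : ℝ≥0∞)⁻¹) ^ N * ∑ f : Fin N → Fin p, ∏ c : Fin p,
        Hw ν s I w (I.filter fun i => f i = c) := by
  rw [lintegral_decomp hν (fun x => w' x * ‖phi s I x‖ₑ) (hw'.mul (measurable_phi s I).enorm)]
  simp only [Hw]
  congr 1
  refine Finset.sum_congr rfl fun f _ => ?_
  rw [← lintegral_prod_dep (S := fun c => I.filter fun i => f i = c)]
  · refine lintegral_congr_ae ?_
    filter_upwards [ae_le_one hν] with y hy
    rw [hww f y hy, phi_comb s I f y hy, Finset.prod_mul_distrib, prod_ite_const hI, enorm_prod']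
  · intro c
    refine Measurable.mul ?_ (measurable_psi s _).enorm
    split_ifs
    · exact hw
    · exact measurable_const
  · intro c x y hxy
    simp only
    rw [dep_psi s _ hxy]
    split_ifs with h
    · rw [h] at hxy; rw [hd hxy]
    · rfl
  · intro c d hcd
    rw [Finset.disjoint_left]
    intro i hi hj
    simp only [Finset.mem_filter] at hi hj
    exact hcd (hi.2.symm.trans hj.2)

open Classical in
theorem weighted (hν : SelfSim ν) (s : Fin N → Fin N → ℂ) (I : Finset (Fin N)) (hI : I.Nonempty)
    (w w' : (Fin N → ℚ_[p]) → ℝ≥0∞) (hw : Measurable w) (hw' : Measurable w')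
    (hd : DependsOn w (I : Set (Fin N)))
    (hww : ∀ f y, (∀ i, ‖y i‖ ≤ 1) → w' (comb f y) =
      if (∀ i ∈ I, ∀ j ∈ I, f i = f j) then w y else 1) :
    ∫⁻ x, w' x * ‖phi s I x‖ₑ ∂(Measure.pi fun _ : Fin N => ν) =
      Cc ν s I + rr p s I * ∫⁻ x, w x * ‖phi s I x‖ₑ ∂(Measure.pi fun _ : Fin N => ν) := by
  rw [lint_fib hν s I hI w w' hw hw' hd hww, sum_fibers (Hw ν s I w)]
  · rw [← Finset.add_sum_erase _ _ (a := {I}) (by simpa using isPart_single hI), mul_add, add_comm]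
    congr 1
    · rw [Cc]
      congr 1
      refine Finset.sum_congr rfl fun P hP => ?_
      congr 1
      refine Finset.prod_congr rfl fun B hB => ?_
      rw [Lp', Hw]
      simp only [Finset.mem_erase, Finset.mem_filter] at hP
      have hne : ¬ (B = I) := by
        rintro rfl
        exact hP.1 (hP.2.2.eq_single hB)
      simp only [if_neg hne, one_mul]
    · simp only [Finset.card_singleton, Finset.prod_singleton, if_true, Nat.descFactorial_one, rr, Hw]
      rw [← mul_assoc, mul_assoc (_ * _)]
      congr 1
      rw [← lintegral_const_mul]
      · simp only [psi, enorm_mul]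
        refine lintegral_congr fun x => ?_
        ring
      · exact hw.mul (measurable_phi s I).enorm
  · have hne : ¬ (∅ = I) := by rintro rfl; simp at hI
    simp only [Hw, if_neg hne]
    simp [psi_small s ∅ (by simp)]

theorem lint_phi_eq (s : Fin N → Fin N → ℂ) (I : Finset (Fin N)) :
    ∫⁻ x, ‖phi s I x‖ₑ ∂(Measure.pi fun _ : Fin N => ν) = ‖(p : ℂ) ^ (SS s I)‖ₑ * Lp' ν s I := by
  rw [Lp', ← lintegral_const_mul _ (measurable_psi s I).enorm]
  simp only [← enorm_mul, ← phi_eq]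

theorem rec_full (hν : SelfSim ν) (s : Fin N → Fin N → ℂ) (I : Finset (Fin N)) (hI : I.Nonempty) :
    ∫⁻ x, ‖phi s I x‖ₑ ∂(Measure.pi fun _ : Fin N => ν) =
      Cc ν s I + rr p s I * ∫⁻ x, ‖phi s I x‖ₑ ∂(Measure.pi fun _ : Fin N => ν) := by
  have := weighted hν s I hI (fun _ => 1) (fun _ => 1) measurable_const measurable_const
    (fun _ _ _ => rfl) (fun f y _ => by simp)
  simpa using this

end
end LogCoulomb

open MeasureTheory
open scoped ENNReal NNReal
namespace LogCoulomb

section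
variable {p : ℕ} [hp : Fact p.Prime] {N : ℕ}

theorem eexp_eq (s : Fin N → Fin N → ℂ) (I : Finset (Fin N)) :
    eexp I s = (I.card : ℂ) - 1 + SS s I := rfl

theorem pow_aux (I : Finset (Fin N)) :
    ((p : ℂ)⁻¹) ^ N * ((p ^ (N - I.card) * p : ℕ) : ℂ) = (p : ℂ) ^ (1 - (I.card : ℂ)) := by
  have hI : I.card ≤ N := by simpa using Finset.card_le_univ I
  have hp0 : (p : ℂ) ≠ 0 := p_ne
  rw [Complex.cpow_sub _ _ hp0, Complex.cpow_one, Complex.cpow_natCast]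
  push_cast
  generalize I.card = m at hI ⊢
  obtain ⟨k, rfl⟩ := Nat.exists_eq_add_of_le hI
  rw [Nat.add_sub_cancel_left]
  rw [inv_pow, pow_add]
  field_simp

theorem rr_eq (s : Fin N → Fin N → ℂ) (I : Finset (Fin N)) :
    rr p s I = ‖(p : ℂ) ^ (-eexp I s)‖ₑ := by
  have e : (p : ℂ) ^ (-eexp I s) = (p : ℂ) ^ (1 - (I.card : ℂ)) * (p : ℂ) ^ (- SS s I) := by
    rw [← Complex.cpow_add _ _ p_ne, eexp_eq]
    congr 1; ring
  have hn : ∀ n : ℕ, ‖(n : ℂ)‖ₑ = (n : ℝ≥0∞) := by intro n; simp [enorm]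
  rw [e, ← pow_aux, enorm_mul, enorm_mul, hn, rr, enorm_pow, enorm_inv p_ne, hn]

theorem rr_lt (s : Fin N → Fin N → ℂ) (I : Finset (Fin N)) :
    rr p s I < 1 ↔ 0 < (eexp I s).re := by
  have h1 : (1 : ℝ) < p := by exact_mod_cast hp.out.one_lt
  have h0 : 0 < p := hp.out.pos
  have : ‖(p : ℂ) ^ (-eexp I s)‖ₑ < 1 ↔ ‖(p : ℂ) ^ (-eexp I s)‖ < 1 := by
    rw [← ofReal_norm, ENNReal.ofReal_lt_one]
  rw [rr_eq, this, Complex.norm_natCast_cpow_of_pos h0, Real.rpow_lt_one_iff_of_pos (by positivity)]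
  simp only [Complex.neg_re]
  constructor
  · rintro (h | h)
    · linarith
    · linarith
  · intro h; left; exact ⟨h1, by linarith⟩

theorem rr_ne_top (s : Fin N → Fin N → ℂ) (I : Finset (Fin N)) : rr p s I ≠ ∞ := by
  rw [rr_eq]; exact enorm_ne_top

variable {ν : Measure ℚ_[p]} [IsProbabilityMeasure ν]

theorem ae_ne (hν : SelfSim ν) (i j : Fin N) (hij : i ≠ j) :
    ∀ᵐ x ∂(Measure.pi fun _ : Fin N => ν), x i ≠ x j := by
  classical
  have hI : ({i, j} : Finset (Fin N)).Nonempty := ⟨i, by simp⟩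
  have hms : MeasurableSet {x : Fin N → ℚ_[p] | x i ≠ x j} :=
    (isOpen_ne_fun (by fun_prop) (by fun_prop)).measurableSet
  have hm : Measurable (Set.indicator {x : Fin N → ℚ_[p] | x i ≠ x j} (fun _ => (1 : ℝ≥0∞))) :=
    measurable_const.indicator hms
  have h := weighted hν (0 : Fin N → Fin N → ℂ) {i, j} hI _ _ hm hm ?_ ?_
  · have h1 := rec_full hν (0 : Fin N → Fin N → ℂ) {i, j} hI
    have hphi : ∀ x, phi (p := p) (0 : Fin N → Fin N → ℂ) {i, j} x = 1 := by
      intro x; simp [phi]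
    have hr : rr p (0 : Fin N → Fin N → ℂ) {i, j} < 1 := by
      rw [rr_lt, eexp_eq, Finset.card_pair hij]
      simp [SS]
    simp only [hphi, enorm_one, mul_one, lintegral_one, measure_univ] at h h1
    rw [lintegral_indicator_const hms, one_mul] at h
    have hd := measure_add_measure_compl (μ := Measure.pi fun _ : Fin N => ν) hms
    rw [measure_univ] at hd
    set t := (Measure.pi fun _ : Fin N => ν) {x : Fin N → ℚ_[p] | x i ≠ x j}
    set d := (Measure.pi fun _ : Fin N => ν) {x : Fin N → ℚ_[p] | x i ≠ x j}ᶜ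
    set r := rr p (0 : Fin N → Fin N → ℂ) {i, j}
    have hdT : d ≠ ∞ := measure_ne_top _ _
    have htT : t ≠ ∞ := measure_ne_top _ _
    have h3 : t + d = t + r * d := by
      conv_rhs => rw [h]
      rw [hd, h1, add_assoc, ← mul_add, hd, mul_one]
    have h4 : d = r * d := (ENNReal.add_right_inj htT).1 h3
    have h5 : d = 0 := by
      by_contra hne
      have : r * d < 1 * d := ENNReal.mul_lt_mul_left hne hdT hr
      rw [one_mul, ← h4] at this
      exact lt_irrefl _ this
    exact h5
  · intro x y hxy
    have e1 : x i = y i := hxy i (by simp)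
    have e2 : x j = y j := hxy j (by simp)
    simp [Set.indicator, e1, e2]
  · intro f y hy
    have hc : (∀ a ∈ ({i, j} : Finset (Fin N)), ∀ b ∈ ({i, j} : Finset (Fin N)), f a = f b) ↔ f i = f j := by
      simp only [Finset.mem_insert, Finset.mem_singleton]
      constructor
      · intro h; exact h i (by simp) j (by simp)
      · rintro h a (rfl | rfl) b (rfl | rfl) <;> simp [h]
    rw [if_congr hc rfl rfl]
    have hp0 : (p : ℚ_[p]) ≠ 0 := by exact_mod_cast hp.out.ne_zero
    split_ifs with h
    · simp only [Set.indicator, Set.mem_ofPred_eq, comb, h]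
      simp [hp0]
    · have := comb_norm_ne hy h
      have hne : comb f y i ≠ comb f y j := by
        intro h'; rw [h'] at this; simp at this
      simp [Set.indicator, hne]

theorem ae_all_ne (hν : SelfSim ν) :
    ∀ᵐ x ∂(Measure.pi fun _ : Fin N => ν), ∀ i j, i ≠ j → x i ≠ x j := by
  rw [ae_all_iff]; intro i
  rw [ae_all_iff]; intro j
  by_cases h : i = j
  · simp [h]
  · filter_upwards [ae_ne hν i j h] with x hx _ using hx

theorem Lp_ne_zero (hν : SelfSim ν) (s : Fin N → Fin N → ℂ) (I : Finset (Fin N)) :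
    Lp' ν s I ≠ 0 := by
  intro h
  rw [Lp', lintegral_eq_zero_iff (measurable_psi s I).enorm] at h
  have : ∀ᵐ x ∂(Measure.pi fun _ : Fin N => ν), False := by
    filter_upwards [h, ae_all_ne hν] with x hx hne
    simp only [Pi.zero_apply, enorm_eq_zero] at hx
    rw [psi_eq, Finset.prod_eq_zero_iff] at hx
    obtain ⟨q, hq, h0⟩ := hx
    simp only [PI, pairs, Finset.mem_filter] at hq
    have h1 : (p : ℂ) ^ (- s q.1 q.2) ≠ 0 := by
      rw [Complex.cpow_ne_zero_iff]; left; exact p_ne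
    have h2 : (‖x q.1 - x q.2‖ : ℂ) ^ s q.1 q.2 ≠ 0 := by
      rw [Complex.cpow_ne_zero_iff]; left
      have := hne _ _ hq.1.2.ne
      simpa [sub_eq_zero] using this
    exact mul_ne_zero h1 h2 h0
  rw [Filter.eventually_false_iff_eq_bot, ae_eq_bot] at this
  exact IsProbabilityMeasure.ne_zero _ this

end
end LogCoulomb

open MeasureTheory
open scoped ENNReal NNReal
namespace LogCoulomb

section
variable {p : ℕ} [hp : Fact p.Prime] {N : ℕ}

/-- truncation set -/
def UU (p : ℕ) [Fact p.Prime] (I : Finset (Fin N)) (k : ℕ) : Set (Fin N → ℚ_[p]) :=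
  {x | ∃ i ∈ I, ∃ j ∈ I, ((p : ℝ)⁻¹) ^ k < ‖x i - x j‖}

theorem measurableSet_UU (I : Finset (Fin N)) (k : ℕ) : MeasurableSet (UU p I k) := by
  have : UU p I k = ⋃ i ∈ I, ⋃ j ∈ I, {x | ((p : ℝ)⁻¹) ^ k < ‖x i - x j‖} := by
    ext x; simp [UU]
  rw [this]
  refine Finset.measurableSet_biUnion _ fun i _ => Finset.measurableSet_biUnion _ fun j _ => ?_
  exact (isOpen_lt continuous_const (by fun_prop)).measurableSet

/-- truncation weight -/
noncomputable def wk (p : ℕ) [Fact p.Prime] (I : Finset (Fin N)) (k : ℕ) :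
    (Fin N → ℚ_[p]) → ℝ≥0∞ := (UU p I k).indicator fun _ => 1

theorem measurable_wk (I : Finset (Fin N)) (k : ℕ) : Measurable (wk p I k) :=
  measurable_const.indicator (measurableSet_UU I k)

theorem dep_wk (I : Finset (Fin N)) (k : ℕ) : DependsOn (wk p I k) (I : Set (Fin N)) := by
  intro x y h
  have : x ∈ UU p I k ↔ y ∈ UU p I k := by
    simp only [UU, Set.mem_ofPred_eq]
    constructor
    · rintro ⟨i, hi, j, hj, hh⟩
      exact ⟨i, hi, j, hj, by rwa [← h i hi, ← h j hj]⟩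
    · rintro ⟨i, hi, j, hj, hh⟩
      exact ⟨i, hi, j, hj, by rwa [h i hi, h j hj]⟩
  by_cases hx : x ∈ UU p I k
  · simp [wk, hx, this.1 hx]
  · have hy : y ∉ UU p I k := mt this.2 hx
    simp [wk, hx, hy]

theorem inv_pos' : (0 : ℝ) < (p : ℝ)⁻¹ := inv_pos.2 (by exact_mod_cast hp.out.pos)
theorem inv_lt_one' : (p : ℝ)⁻¹ < 1 := inv_lt_one_of_one_lt₀ (by exact_mod_cast hp.out.one_lt)

open Classical in
theorem wk_succ (I : Finset (Fin N)) (k : ℕ) (f : Fin N → Fin p) (y : Fin N → ℚ_[p])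
    (hy : ∀ i, ‖y i‖ ≤ 1) : wk p I (k+1) (comb f y) =
      if (∀ i ∈ I, ∀ j ∈ I, f i = f j) then wk p I k y else 1 := by
  split_ifs with h
  · have : comb f y ∈ UU p I (k+1) ↔ y ∈ UU p I k := by
      simp only [UU, Set.mem_ofPred_eq]
      refine exists_congr fun i => and_congr_right fun hi => exists_congr fun j =>
        and_congr_right fun hj => ?_
      rw [comb_norm_eq (h i hi j hj), pow_succ', mul_lt_mul_iff_right₀ inv_pos']
    simp only [wk, Set.indicator, this]
  · push Not at h
    obtain ⟨i, hi, j, hj, hij⟩ := h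
    have : comb f y ∈ UU p I (k+1) := ⟨i, hi, j, hj, by
      rw [comb_norm_ne hy hij]
      exact pow_lt_one₀ inv_pos'.le inv_lt_one' (by omega)⟩
    simp only [wk, Set.indicator, this, if_true]

variable {ν : Measure ℚ_[p]} [IsProbabilityMeasure ν]

/-- truncated integrals -/
noncomputable def aK (ν : Measure ℚ_[p]) [IsProbabilityMeasure ν] (s : Fin N → Fin N → ℂ)
    (I : Finset (Fin N)) (k : ℕ) : ℝ≥0∞ :=
  ∫⁻ x, wk p I k x * ‖phi s I x‖ₑ ∂(Measure.pi fun _ : Fin N => ν)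

theorem aK_zero (hν : SelfSim ν) (s : Fin N → Fin N → ℂ) (I : Finset (Fin N)) :
    aK ν s I 0 = 0 := by
  rw [aK, lintegral_eq_zero_iff (f := fun x => wk p I 0 x * ‖phi s I x‖ₑ)
    ((measurable_wk I 0).mul (measurable_phi s I).enorm)]
  filter_upwards [ae_le_one hν] with x hx
  have : x ∉ UU p I 0 := by
    rintro ⟨i, _, j, _, h⟩
    have h2 := Padic.nonarchimedean (x i) (-(x j))
    rw [norm_neg, ← sub_eq_add_neg] at h2
    have := h2.trans (max_le (hx i) (hx j))
    rw [pow_zero] at h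
    linarith
  simp [wk, this]

theorem aK_succ (hν : SelfSim ν) (s : Fin N → Fin N → ℂ) (I : Finset (Fin N)) (hI : I.Nonempty)
    (k : ℕ) : aK ν s I (k+1) = Cc ν s I + rr p s I * aK ν s I k :=
  weighted hν s I hI _ _ (measurable_wk I k) (measurable_wk I (k+1)) (dep_wk I k)
    (fun f y hy => by rw [wk_succ I k f y hy])

theorem wk_mono (I : Finset (Fin N)) (x : Fin N → ℚ_[p]) : Monotone fun k => wk p I k x := by
  intro k l hkl
  refine Set.indicator_le_indicator_of_subset ?_ (fun _ => zero_le) x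
  rintro x ⟨i, hi, j, hj, h⟩
  exact ⟨i, hi, j, hj, (pow_le_pow_of_le_one inv_pos'.le inv_lt_one'.le hkl).trans_lt h⟩

theorem iSup_aK (hν : SelfSim ν) (s : Fin N → Fin N → ℂ) (I : Finset (Fin N)) (hI : 1 < I.card) :
    ⨆ k, aK ν s I k = ∫⁻ x, ‖phi s I x‖ₑ ∂(Measure.pi fun _ : Fin N => ν) := by
  unfold aK
  rw [← lintegral_iSup (f := fun k x => wk p I k x * ‖phi s I x‖ₑ) (fun k => (measurable_wk I k).mul (measurable_phi s I).enorm)]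
  · refine lintegral_congr_ae ?_
    filter_upwards [ae_all_ne hν] with x hx
    obtain ⟨i, hi, j, hj, hij⟩ := Finset.one_lt_card.1 hI
    have hpos : 0 < ‖x i - x j‖ := by rw [norm_pos_iff, sub_ne_zero]; exact hx i j hij
    obtain ⟨k, hk⟩ := exists_pow_lt_of_lt_one hpos (inv_lt_one' (p := p))
    apply le_antisymm
    · refine iSup_le fun k => ?_
      refine mul_le_of_le_one_left (zero_le) ?_
      exact Set.indicator_le_self' (fun _ _ => zero_le) x
    · refine le_iSup_of_le k ?_
      have : x ∈ UU p I k := ⟨i, hi, j, hj, hk⟩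
      simp [wk, this]
  · intro k l hkl x
    exact mul_le_mul_left (wk_mono I x hkl) _

theorem Cc_ne_zero (hν : SelfSim ν) (s : Fin N → Fin N → ℂ) (I : Finset (Fin N)) (hI : 1 < I.card) :
    Cc ν s I ≠ 0 := by
  intro h
  have hne : I.Nonempty := Finset.card_pos.1 (by omega)
  have h0 : ∀ k, aK ν s I k = 0 := by
    intro k
    induction k with
    | zero => exact aK_zero hν s I
    | succ k ih => rw [aK_succ hν s I hne, h, ih]; simp
  have h1 := iSup_aK hν s I hI
  simp only [h0, ciSup_const] at h1
  rw [lint_phi_eq] at h1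
  have h2 : ‖(p : ℂ) ^ (SS s I)‖ₑ ≠ 0 := by
    rw [enorm_ne_zero, Complex.cpow_ne_zero_iff]; left; exact p_ne
  exact mul_ne_zero h2 (Lp_ne_zero hν s I) h1.symm

theorem enorm_p_ne (z : ℂ) : ‖(p : ℂ) ^ z‖ₑ ≠ 0 := by
  rw [enorm_ne_zero, Complex.cpow_ne_zero_iff]; left; exact p_ne

theorem Lp_lt_top_iff (s : Fin N → Fin N → ℂ) (I : Finset (Fin N)) :
    ∫⁻ x, ‖phi s I x‖ₑ ∂(Measure.pi fun _ : Fin N => ν) < ∞ ↔ Lp' ν s I < ∞ := by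
  rw [lint_phi_eq]
  constructor
  · intro h
    exact ENNReal.lt_top_of_mul_ne_top_right h.ne (enorm_p_ne _)
  · intro h
    exact ENNReal.mul_lt_top enorm_lt_top h

theorem re_pos_of_finite (hν : SelfSim ν) (s : Fin N → Fin N → ℂ) (I : Finset (Fin N))
    (hI : 1 < I.card) (hL : Lp' ν s I < ∞) : 0 < (eexp I s).re := by
  rw [← rr_lt (p := p)]
  by_contra hr
  push Not at hr
  have hne : I.Nonempty := Finset.card_pos.1 (by omega)
  have h1 := rec_full hν s I hne
  rw [← Lp_lt_top_iff] at hL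
  set A := ∫⁻ x, ‖phi s I x‖ₑ ∂(Measure.pi fun _ : Fin N => ν)
  have h2 : A < Cc ν s I + A := by
    rw [add_comm]; exact ENNReal.lt_add_right hL.ne (Cc_ne_zero hν s I hI)
  have h3 : Cc ν s I + A ≤ A := by
    conv_rhs => rw [h1]
    gcongr
    exact le_mul_of_one_le_left (zero_le) hr
  exact absurd h2 (not_lt.2 h3)

theorem finite_sub (hν : SelfSim ν) (s : Fin N → Fin N → ℂ) (I J : Finset (Fin N))
    (hJ : J ⊆ I) (hL : Lp' ν s I < ∞) : Lp' ν s J < ∞ := by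
  classical
  rcases I.eq_empty_or_nonempty with rfl | hI
  · rw [Finset.subset_empty.1 hJ]; exact hL
  rw [← Lp_lt_top_iff] at hL
  have h := lint_fib hν s I hI (fun _ => 1) (fun _ => 1) measurable_const measurable_const
    (fun _ _ _ => rfl) (fun f y _ => by simp)
  simp only [one_mul] at h
  rw [h] at hL
  have h2 := ENNReal.lt_top_of_mul_ne_top_right hL.ne (by simp)
  have hH : ∀ B, Hw ν s I (fun _ => 1) B = Lp' ν s B := by intro B; simp [Hw, Lp']
  simp only [hH] at h2
  have hp1 : 1 < p := hp.out.one_lt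
  have h3 := (ENNReal.sum_lt_top.1 h2) (fun i => if i ∈ J then ⟨0, by omega⟩ else ⟨1, hp1⟩)
    (Finset.mem_univ _)
  rw [← Finset.mul_prod_erase _ _ (Finset.mem_univ (⟨0, by omega⟩ : Fin p))] at h3
  have h4 := ENNReal.lt_top_of_mul_ne_top_left h3.ne
    (Finset.prod_ne_zero_iff.2 fun c _ => Lp_ne_zero hν s _)
  convert h4 using 2
  ext i
  simp only [Finset.mem_filter]
  constructor
  · intro hi; simp [hi, hJ hi]
  · rintro ⟨_, hi⟩
    by_contra hn
    simp [hn] at hi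

theorem finite_of_omega (hν : SelfSim ν) (s : Fin N → Fin N → ℂ) (I : Finset (Fin N))
    (h : InOmega I s) : Lp' ν s I < ∞ := by
  classical
  induction I using Finset.strongInduction with
  | H I ih =>
    by_cases hI : 1 < I.card
    · have hne : I.Nonempty := Finset.card_pos.1 (by omega)
      have hr : rr p s I < 1 := (rr_lt s I).2 (h I subset_rfl hI)
      have hC : Cc ν s I < ∞ := by
        rw [Cc]
        refine ENNReal.mul_lt_top (ENNReal.pow_lt_top ?_) (ENNReal.sum_lt_top.2 fun P hP => ?_)
        · simpa using hp.out.pos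
        · refine ENNReal.mul_lt_top (ENNReal.natCast_lt_top _) (ENNReal.prod_lt_top fun B hB => ?_)
          simp only [Finset.mem_erase, Finset.mem_filter] at hP
          have hBI : B ⊂ I := by
            refine (hP.2.2.2.1 B hB).ssubset_of_ne ?_
            rintro rfl
            exact hP.1 (hP.2.2.eq_single hB)
          exact ih B hBI (fun l hl => h l (hl.trans hBI.1))
      rw [← Lp_lt_top_iff, ← iSup_aK hν s I hI]
      have h1r : 1 - rr p s I ≠ 0 := by simpa [tsub_eq_zero_iff_le] using hr
      have h1T : 1 - rr p s I ≠ ∞ := by simp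
      have hb : ∀ k, aK ν s I k ≤ Cc ν s I * (1 - rr p s I)⁻¹ := by
        intro k
        induction k with
        | zero => rw [aK_zero hν]; exact zero_le
        | succ k ihk =>
          rw [aK_succ hν s I hne]
          calc Cc ν s I + rr p s I * aK ν s I k
              ≤ Cc ν s I + rr p s I * (Cc ν s I * (1 - rr p s I)⁻¹) := by gcongr
            _ = Cc ν s I * ((1 - rr p s I) * (1 - rr p s I)⁻¹ + rr p s I * (1 - rr p s I)⁻¹) := by
              rw [ENNReal.mul_inv_cancel h1r h1T]; ring
            _ = Cc ν s I * (1 - rr p s I)⁻¹ := by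
              rw [← add_mul, tsub_add_cancel_of_le hr.le, one_mul]
      refine (iSup_le hb).trans_lt (ENNReal.mul_lt_top hC ?_)
      exact ENNReal.inv_lt_top.2 (pos_iff_ne_zero.2 h1r)
    · rw [Lp_small s I (by omega)]; exact ENNReal.one_lt_top

theorem integrable_phi_iff (hν : SelfSim ν) (s : Fin N → Fin N → ℂ) (I : Finset (Fin N)) :
    Integrable (phi s I) (Measure.pi fun _ : Fin N => ν) ↔ InOmega I s := by
  have : Integrable (phi s I) (Measure.pi fun _ : Fin N => ν) ↔ Lp' ν s I < ∞ := by
    rw [← Lp_lt_top_iff, Integrable, hasFiniteIntegral_iff_enorm]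
    exact and_iff_right (measurable_phi s I).aestronglyMeasurable
  rw [this]
  refine ⟨fun h l hl hc => ?_, finite_of_omega hν s I⟩
  exact re_pos_of_finite hν s l hc (finite_sub hν s I l hl h)

end
end LogCoulomb

open MeasureTheory
open scoped ENNReal NNReal
namespace LogCoulomb

section
variable {p : ℕ} [hp : Fact p.Prime] {N : ℕ}

/-- normalized integral -/
noncomputable def Wp (ν : Measure ℚ_[p]) [IsProbabilityMeasure ν] (s : Fin N → Fin N → ℂ)
    (B : Finset (Fin N)) : ℂ :=
  ∫ x, psi s B x ∂(Measure.pi fun _ : Fin N => ν)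

variable {ν : Measure ℚ_[p]} [IsProbabilityMeasure ν]

theorem Wp_small (s : Fin N → Fin N → ℂ) (B : Finset (Fin N)) (h : B.card ≤ 1) :
    Wp ν s B = 1 := by
  simp [Wp, psi_small s B h]

theorem int_phi_eq (s : Fin N → Fin N → ℂ) (I : Finset (Fin N)) :
    ∫ x, phi s I x ∂(Measure.pi fun _ : Fin N => ν) = (p : ℂ) ^ (SS s I) * Wp ν s I := by
  rw [Wp, ← integral_const_mul]
  simp only [← phi_eq]

open Classical in
theorem int_rec (hν : SelfSim ν) (s : Fin N → Fin N → ℂ) (I : Finset (Fin N))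
    (h : InOmega I s) :
    (p : ℂ) ^ (SS s I) * Wp ν s I = ((p : ℂ)⁻¹) ^ N * ∑ P ∈ Finset.univ.filter (IsPart I),
        ((p ^ (N - I.card) * p.descFactorial P.card : ℕ) : ℂ) * ∏ B ∈ P, Wp ν s B := by
  rw [← int_phi_eq, integral_decomp hν _ (measurable_phi s I) ((integrable_phi_iff hν s I).2 h),
    ← sum_fibers (Wp ν s) (Wp_small s ∅ (by simp))]
  congr 1
  refine Finset.sum_congr rfl fun f _ => ?_
  simp only [Wp]
  rw [← integral_prod_dep (S := fun c => I.filter fun i => f i = c)]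
  · refine integral_congr_ae ?_
    filter_upwards [ae_le_one hν] with y hy
    rw [phi_comb s I f y hy]
  · exact fun c => measurable_psi s _
  · exact fun c => dep_psi s _
  · intro c d hcd
    rw [Finset.disjoint_left]
    intro i hi hj
    simp only [Finset.mem_filter] at hi hj
    exact hcd (hi.2.symm.trans hj.2)

theorem desc_aux (d : ℕ) (hd : 1 ≤ d) :
    p.descFactorial d = p * (p - 1).descFactorial (d - 1) := by
  obtain ⟨e, rfl⟩ := Nat.exists_eq_add_of_le hd
  obtain ⟨m, hm⟩ := Nat.exists_eq_add_of_le hp.out.pos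
  subst hm
  rw [Nat.add_comm, Nat.add_comm 1 e, Nat.succ_descFactorial_succ]
  simp [Nat.add_comm]

open Classical in
theorem Wrec' (hν : SelfSim ν) (s : Fin N → Fin N → ℂ) (B : Finset (Fin N))
    (h : InOmega B s) (hB : 1 < B.card) :
    Wp ν s B = ∑ ρ ∈ (Finset.univ.filter (IsPart B)).erase {B},
      (((p - 1).descFactorial (ρ.card - 1) : ℂ) / ((p : ℂ) ^ eexp B s - 1)) * ∏ C ∈ ρ, Wp ν s C := by
  have hne : B.Nonempty := Finset.card_pos.1 (by omega)
  have h1 := int_rec hν s B h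
  rw [← Finset.add_sum_erase _ _ (a := {B}) (by simpa using isPart_single hne)] at h1
  have h2 : ∑ P ∈ (Finset.univ.filter (IsPart B)).erase {B},
        ((p ^ (N - B.card) * p.descFactorial P.card : ℕ) : ℂ) * ∏ C ∈ P, Wp ν s C =
      ((p ^ (N - B.card) * p : ℕ) : ℂ) * ∑ P ∈ (Finset.univ.filter (IsPart B)).erase {B},
        ((p - 1).descFactorial (P.card - 1) : ℂ) * ∏ C ∈ P, Wp ν s C := by
    rw [Finset.mul_sum]
    refine Finset.sum_congr rfl fun P hP => ?_
    simp only [Finset.mem_erase, Finset.mem_filter] at hP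
    have hPc : 1 ≤ P.card := by
      obtain ⟨i, hi⟩ := hne
      obtain ⟨C, hC, _⟩ := hP.2.2.2.2 i hi
      exact Finset.card_pos.2 ⟨C, hC.1⟩
    rw [desc_aux _ hPc]
    push_cast
    ring
  rw [h2] at h1
  simp only [Finset.card_singleton, Finset.prod_singleton, Nat.descFactorial_one] at h1
  rw [← mul_add, ← mul_assoc, pow_aux] at h1
  have hre : 0 < (eexp B s).re := h B subset_rfl hB
  have hgt : 1 < ‖(p : ℂ) ^ eexp B s‖ := by
    rw [Complex.norm_natCast_cpow_of_pos hp.out.pos]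
    exact Real.one_lt_rpow (by exact_mod_cast hp.out.one_lt) hre
  have hD : (p : ℂ) ^ eexp B s - 1 ≠ 0 := by
    intro h0
    rw [sub_eq_zero] at h0
    rw [h0] at hgt
    simp at hgt
  have he : (p : ℂ) ^ (1 - (B.card : ℂ)) * (p : ℂ) ^ eexp B s = (p : ℂ) ^ SS s B := by
    rw [← Complex.cpow_add _ _ p_ne, eexp_eq]
    congr 1; ring
  have h0 : (p : ℂ) ^ (1 - (B.card : ℂ)) ≠ 0 := by
    rw [Complex.cpow_ne_zero_iff]; left; exact p_ne
  rw [← he, mul_assoc] at h1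
  have h3 := mul_left_cancel₀ h0 h1
  simp only [div_mul_eq_mul_div]
  rw [← Finset.sum_div, eq_div_iff hD, mul_sub, mul_one, mul_comm, h3]
  ring

theorem chain_W (hν : SelfSim ν) (s : Fin N → Fin N → ℂ) (I : Finset (Fin N)) (hI : I.Nonempty)
    (h : InOmega I s) :
    ∑ᶠ S ∈ {S : SplChain N I | S.Reduced}, ∏ lam ∈ S.branches,
        ((p - 1).descFactorial (S.degree lam - 1) : ℂ) / ((p : ℂ) ^ eexp lam s - 1) = Wp ν s I := by
  classical
  exact chains_eq I hI
    (fun lam d => ((p - 1).descFactorial (d - 1) : ℂ) / ((p : ℂ) ^ eexp lam s - 1))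
    (Wp ν s) (fun B hB => Wp_small s B hB.le)
    (fun B hB hc => Wrec' hν s B (fun l hl => h l (hl.trans hB)) hc)

end
end LogCoulomb

open MeasureTheory
open scoped ENNReal NNReal
namespace LogCoulomb

section
variable {p : ℕ} [hp : Fact p.Prime] {N : ℕ}

/-- integrand on `I`-tuples -/
noncomputable def FI (s : Fin N → Fin N → ℂ) (I : Finset (Fin N)) (x : I → ℚ_[p]) : ℂ :=
  ∏ q ∈ Finset.univ.filter (fun q : (↥I) × (↥I) => (q.1 : Fin N) < (q.2 : Fin N)),
            (‖x q.1 - x q.2‖ : ℂ) ^ s q.1.1 q.2.1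

theorem prod_FI {M : Type*} [CommMonoid M] (I : Finset (Fin N)) (g : Fin N × Fin N → M) :
    ∏ q ∈ Finset.univ.filter (fun q : (↥I) × (↥I) => (q.1 : Fin N) < (q.2 : Fin N)),
      g (q.1.1, q.2.1) = ∏ q ∈ PI I, g q := by
  refine Finset.prod_bij (fun q _ => (q.1.1, q.2.1)) ?_ ?_ ?_ ?_
  · rintro ⟨a, b⟩ h
    simp only [Finset.mem_filter, Finset.mem_univ, true_and] at h
    simp [PI, pairs, h]
  · rintro ⟨a, b⟩ _ ⟨c, d⟩ _ h
    simp only [Prod.mk.injEq] at h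
    exact Prod.ext (Subtype.ext h.1) (Subtype.ext h.2)
  · rintro ⟨a, b⟩ h
    simp only [PI, pairs, Finset.mem_filter, Finset.mem_univ, true_and] at h
    exact ⟨(⟨a, h.2.1⟩, ⟨b, h.2.2⟩), by simpa using h.1, rfl⟩
  · intro q _; rfl

theorem FI_restrict (s : Fin N → Fin N → ℂ) (I : Finset (Fin N)) (x : Fin N → ℚ_[p]) :
    FI s I (I.restrict x) = phi s I x :=
  prod_FI I fun q => (‖x q.1 - x q.2‖ : ℂ) ^ s q.1 q.2

theorem measurable_FI (s : Fin N → Fin N → ℂ) (I : Finset (Fin N)) :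
    Measurable (FI (p := p) s I) := by
  unfold FI
  fun_prop

theorem cpow_zpow (v : ℤ) (z : ℂ) : (((p : ℝ) ^ (-v) : ℝ) : ℂ) ^ z = (p : ℂ) ^ (-(v : ℂ) * z) := by
  have hpR : (0 : ℝ) < p := by exact_mod_cast hp.out.pos
  have h1 : (((p : ℝ) ^ (-v) : ℝ) : ℂ) ≠ 0 := by
    rw [Complex.ofReal_ne_zero]; exact (zpow_pos hpR _).ne'
  rw [Complex.cpow_def_of_ne_zero h1, Complex.cpow_def_of_ne_zero p_ne,
    ← Complex.ofReal_log (zpow_pos hpR _).le, Real.log_zpow, ← Complex.natCast_log]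
  push_cast
  ring_nf

theorem FI_scale (s : Fin N → Fin N → ℂ) (I : Finset (Fin N)) (v : ℤ) (x : I → ℚ_[p]) :
    FI s I (fun i => (p : ℚ_[p]) ^ v * x i) = (p : ℂ) ^ (-(v : ℂ) * SS s I) * FI s I x := by
  have hpR : (0 : ℝ) < p := by exact_mod_cast hp.out.pos
  rw [SS, Finset.mul_sum, cpow_sum' _ _ p_ne,
    ← prod_FI I (fun q => (p : ℂ) ^ (-(v : ℂ) * s q.1 q.2)), FI, FI, ← Finset.prod_mul_distrib]
  refine Finset.prod_congr rfl fun q _ => ?_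
  rw [← mul_sub, norm_mul, norm_zpow, Padic.norm_p, inv_zpow', Complex.ofReal_mul,
    Complex.mul_cpow_ofReal_nonneg (zpow_pos hpR _).le (norm_nonneg _), cpow_zpow]

theorem pi_restrict {ν : Measure ℚ_[p]} [IsProbabilityMeasure ν] (I : Finset (Fin N)) :
    (Measure.pi fun _ : Fin N => ν).map I.restrict = Measure.pi fun _ : I => ν := by
  rw [← Measure.infinitePi_eq_pi, Measure.infinitePi_map_restrict]

theorem pi_scale (μ : Measure ℚ_[p]) [SigmaFinite μ] [μ.IsAddHaarMeasure] (hμ : μ (Zball p) = 1)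
    (v : ℤ) (I : Finset (Fin N)) :
    (Measure.pi fun _ : I => μ.restrict (pvball p v)) =
      ((p : ℝ≥0∞) ^ (-v)) ^ I.card •
        (Measure.pi fun _ : I => μ.restrict (Zball p)).map
          (fun x i => (p : ℚ_[p]) ^ v * x i) := by
  apply Measure.pi_eq
  intro t ht
  rw [Measure.smul_apply, Measure.map_apply (by fun_prop) (MeasurableSet.univ_pi ht)]
  have : (fun (x : I → ℚ_[p]) i => (p : ℚ_[p]) ^ v * x i) ⁻¹' (Set.univ.pi t) =
      Set.univ.pi fun i => (fun x => (p : ℚ_[p]) ^ v * x) ⁻¹' (t i) := by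
    ext x; simp [Set.mem_pi]
  rw [this, Measure.pi_pi, restrict_pvball μ hμ v]
  simp only [Measure.smul_apply, smul_eq_mul]
  rw [Finset.prod_mul_distrib]
  simp only [Finset.prod_const, Finset.card_univ, Fintype.card_coe]
  congr 1
  refine Finset.prod_congr rfl fun i _ => ?_
  rw [Measure.map_apply (by fun_prop) (ht i)]

end
end LogCoulomb

open MeasureTheory
open scoped ENNReal NNReal
namespace LogCoulomb

section
variable {p : ℕ} [hp : Fact p.Prime] {N : ℕ}

theorem toReal_aux (v : ℤ) : ((p : ℝ≥0∞) ^ v).toReal = (p : ℝ) ^ v := by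
  cases v with
  | ofNat n => simp
  | negSucc n => simp [zpow_negSucc]

theorem pv_ne (v : ℤ) (n : ℕ) : ((p : ℝ≥0∞) ^ v) ^ n ≠ 0 ∧ ((p : ℝ≥0∞) ^ v) ^ n ≠ ∞ := by
  have hpE : (p : ℝ≥0∞) ≠ 0 := by exact_mod_cast hp.out.ne_zero
  have hpT : (p : ℝ≥0∞) ≠ ∞ := ENNReal.natCast_ne_top p
  exact ⟨pow_ne_zero _ (ENNReal.zpow_pos hpE hpT v).ne', ENNReal.pow_ne_top (ENNReal.zpow_ne_top hpE hpT v)⟩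

variable (μ : Measure ℚ_[p]) [SigmaFinite μ] [μ.IsAddHaarMeasure]

theorem measurable_scale (v : ℤ) (I : Finset (Fin N)) :
    Measurable (fun (x : I → ℚ_[p]) i => (p : ℚ_[p]) ^ v * x i) := by fun_prop

theorem main_int (hμ : μ (Zball p) = 1) (v : ℤ) (I : Finset (Fin N)) (s : Fin N → Fin N → ℂ) :
    Integrable (FI s I) (Measure.pi fun _ : I => μ.restrict (pvball p v)) ↔ InOmega I s := by
  have hν := selfSim_of μ hμ
  have := hν.prob
  rw [pi_scale μ hμ, integrable_smul_measure (pv_ne _ _).1 (pv_ne _ _).2,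
    integrable_map_measure (measurable_FI s I).aestronglyMeasurable
      (measurable_scale v I).aemeasurable]
  have e : (FI s I ∘ fun (x : I → ℚ_[p]) i => (p : ℚ_[p]) ^ v * x i) =
      fun x => (p : ℂ) ^ (-(v : ℂ) * SS s I) * FI s I x := by
    funext x; exact FI_scale s I v x
  have h0 : (p : ℂ) ^ (-(v : ℂ) * SS s I) ≠ 0 := by
    rw [Complex.cpow_ne_zero_iff]; left; exact p_ne
  rw [e, integrable_const_mul_iff (isUnit_iff_ne_zero.2 h0), ← pi_restrict,
    integrable_map_measure (measurable_FI s I).aestronglyMeasurable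
      (Finset.measurable_restrict I).aemeasurable, ← integrable_phi_iff hν]
  have e2 : FI s I ∘ I.restrict = phi (p := p) s I := by
    funext x; exact FI_restrict s I x
  rw [e2]

theorem main_val (hμ : μ (Zball p) = 1) (v : ℤ) (I : Finset (Fin N)) (hI : I.Nonempty)
    (s : Fin N → Fin N → ℂ) (h : InOmega I s) :
    ∫ x, FI s I x ∂(Measure.pi fun _ : I => μ.restrict (pvball p v)) =
      ((p : ℂ) ^ (((v : ℂ) - 1) * (eexp I s + 1) + (I.card : ℂ)))⁻¹ *
            ∑ᶠ S ∈ {S : SplChain N I | S.Reduced},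
              ∏ lam ∈ S.branches,
                ((p - 1).descFactorial (S.degree lam - 1) : ℂ) /
                  ((p : ℂ) ^ eexp lam s - 1) := by
  have hν := selfSim_of μ hμ
  have := hν.prob
  rw [chain_W hν s I hI h, pi_scale μ hμ, integral_smul_measure,
    integral_map (measurable_scale v I).aemeasurable (measurable_FI s I).aestronglyMeasurable]
  simp only [FI_scale]
  rw [integral_const_mul, ← pi_restrict,
    integral_map (Finset.measurable_restrict I).aemeasurable
      (measurable_FI s I).aestronglyMeasurable]
  simp only [FI_restrict]
  rw [int_phi_eq, ENNReal.toReal_pow, toReal_aux, Complex.real_smul, Complex.ofReal_pow,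
    ← Complex.cpow_natCast, cpow_zpow, ← mul_assoc, ← mul_assoc, ← Complex.cpow_add _ _ p_ne,
    ← Complex.cpow_add _ _ p_ne, ← Complex.cpow_neg, eexp_eq]
  congr 2
  ring

theorem PI_univ : PI (Finset.univ : Finset (Fin N)) = pairs N := by
  simp [PI]

theorem phi_univ (s : Fin N → Fin N → ℂ) : phi (p := p) s Finset.univ =
    fun x : Fin N → ℚ_[p] => ∏ q ∈ pairs N, (‖x q.1 - x q.2‖ : ℂ) ^ s q.1 q.2 := by
  funext x; rw [phi, PI_univ]

end

theorem statement_9 (p : ℕ) [Fact p.Prime] (N : ℕ) (hN : 2 ≤ N)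
    (μ : Measure ℚ_[p]) [SigmaFinite μ] [μ.IsAddHaarMeasure] (hμ : μ (Zball p) = 1)
    (v : ℤ) (I : Finset (Fin N)) (hI : I.Nonempty) (s : Fin N → Fin N → ℂ) :
    ((Integrable
        (fun x : ↥I → ℚ_[p] =>
          ∏ q ∈ Finset.univ.filter (fun q : (↥I) × (↥I) => (q.1 : Fin N) < (q.2 : Fin N)),
            (‖x q.1 - x q.2‖ : ℂ) ^ s q.1.1 q.2.1)
        (Measure.pi fun _ => μ.restrict (pvball p v)) ↔ InOmega I s) ∧
      (InOmega I s →
        ZI p μ (pvball p v) I s =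
          ((p : ℂ) ^ (((v : ℂ) - 1) * (eexp I s + 1) + (I.card : ℂ)))⁻¹ *
            ∑ᶠ S ∈ {S : SplChain N I | S.Reduced},
              ∏ lam ∈ S.branches,
                ((p - 1).descFactorial (S.degree lam - 1) : ℂ) /
                  ((p : ℂ) ^ eexp lam s - 1))) ∧
    ((Integrable
        (fun x : Fin N → ℚ_[p] => ∏ q ∈ pairs N, (‖x q.1 - x q.2‖ : ℂ) ^ s q.1 q.2)
        (Measure.pi fun _ => μ.restrict (Zball p)) ↔ InOmega Finset.univ s) ∧
      (InOmega Finset.univ s →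
        ZNs p μ (Zball p) N s =
          (p : ℂ) ^ (∑ q ∈ pairs N, s q.1 q.2) *
            ∑ᶠ S ∈ {S : SplChain N (Finset.univ : Finset (Fin N)) | S.Reduced},
              ∏ lam ∈ S.branches,
                ((p - 1).descFactorial (S.degree lam - 1) : ℂ) /
                  ((p : ℂ) ^ eexp lam s - 1))) := by
  have hν := selfSim_of μ hμ
  have := hν.prob
  refine ⟨⟨main_int μ hμ v I s, main_val μ hμ v I hI s⟩, ?_, ?_⟩
  · rw [← phi_univ]
    exact integrable_phi_iff hν s Finset.univ
  · intro h
    have hne : (Finset.univ : Finset (Fin N)).Nonempty := ⟨⟨0, by omega⟩, Finset.mem_univ _⟩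
    rw [chain_W hν s Finset.univ hne h]
    have e := int_phi_eq (ν := μ.restrict (Zball p)) s (Finset.univ : Finset (Fin N))
    rw [phi_univ, SS, PI_univ] at e
    exact e

end LogCoulomb
end

section
/- For every prime p and every β ∈ ℂ with Re(β) > −1/6, the integral ∫_{ℤ_p³} |x_1−x_2|_p^{2β}·|x_1−x_3|_p^{3β}·|x_2−x_3|_p^{6β} dμ³ (the canonical partition function Z_3(ℤ_p,β) of a log-Coulomb gas in ℤ_p with three particles of charges 1, 2, 3) converges absolutely and equals [p^{11β}/(p^{2+11β} − 1)] · ((p−1)(p−2) + (p−1)²·[1/(p^{1+2β} − 1) + 1/(p^{1+3β} − 1) + 1/(p^{1+6β} − 1)]). -/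
open MeasureTheory
open scoped LinearAlgebra.Projectivization

namespace LogCoulomb

open Set in
/-- Integrals of homogeneous functions over a ball, via self-similarity. -/
theorem selfsim {E : Type*} [MeasurableSpace E] (ν : Measure E) (T : E → E) (hT : Measurable T)
    (n : E → ℝ) (hn : Measurable n) (hn0 : ∀ x, 0 ≤ n x) (q : ℝ) (hq : 1 < q)
    (hnT : ∀ x, n (T x) = q⁻¹ * n x) (hnull : ν {x | n x = 0} = 0)
    (K : ℝ) (hK : 0 < K) (hν : ν.map T = ENNReal.ofReal K • ν)
    (f : E → ℂ) (hf : Measurable f) (c : ℂ) (hc : ∀ x, f (T x) = c * f x) (hcK : ‖c‖ < K)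
    (hS : IntegrableOn f {x | q⁻¹ < n x ∧ n x ≤ 1} ν) :
    IntegrableOn f {x | n x ≤ 1} ν ∧
      (∫ x in {x | n x ≤ 1}, f x ∂ν) * (1 - c / K) =
        ∫ x in {x | q⁻¹ < n x ∧ n x ≤ 1}, f x ∂ν := by
  have hq0 : 0 < q := by linarith
  have hqi : 0 < q⁻¹ := by positivity
  have hK' : ENNReal.ofReal K ≠ 0 := by simpa using hK
  have hKt : ENNReal.ofReal K ≠ ⊤ := ENNReal.ofReal_ne_top
  have hν' : ν = (ENNReal.ofReal K)⁻¹ • ν.map T := by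
    rw [hν, smul_smul, ENNReal.inv_mul_cancel hK' hKt, one_smul]
  set S : ℕ → Set E := fun k => {x | q⁻¹ ^ (k+1) < n x ∧ n x ≤ q⁻¹ ^ k} with hSdef
  have hSm : ∀ k, MeasurableSet (S k) := fun k =>
    (measurableSet_lt measurable_const hn).inter (measurableSet_le hn measurable_const)
  have hpre : ∀ k, T ⁻¹' (S (k+1)) = S k := by
    intro k
    ext x
    simp only [hSdef, mem_preimage, mem_ofPred_eq, hnT, pow_succ' q⁻¹ (k+1)]
    rw [mul_lt_mul_iff_right₀ hqi]
    rw [pow_succ' q⁻¹ k, mul_le_mul_iff_right₀ hqi]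
  have hS0 : S 0 = {x | q⁻¹ < n x ∧ n x ≤ 1} := by simp [hSdef]
  have hlin : ∀ k, ∫⁻ x in S k, ‖f x‖ₑ ∂ν =
      (ENNReal.ofReal (‖c‖ / K)) ^ k * ∫⁻ x in S 0, ‖f x‖ₑ ∂ν := by
    intro k
    induction k with
    | zero => simp
    | succ k ih =>
      rw [pow_succ', mul_assoc, ← ih]
      conv_lhs => rw [hν', Measure.restrict_smul, lintegral_smul_measure,
        setLIntegral_map (hSm _) hf.enorm hT, hpre]
      simp_rw [hc, enorm_mul]
      rw [lintegral_const_mul _ hf.enorm, smul_eq_mul, ← mul_assoc,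
        ENNReal.ofReal_div_of_pos hK, ofReal_norm, ENNReal.div_eq_inv_mul]
  have hfin : ∫⁻ x in ⋃ k, S k, ‖f x‖ₑ ∂ν < ⊤ := by
    refine lt_of_le_of_lt (lintegral_iUnion_le _ _) ?_
    rw [tsum_congr hlin]
    rw [ENNReal.tsum_mul_right, ENNReal.tsum_geometric]
    refine ENNReal.mul_lt_top ?_ ?_
    · rw [ENNReal.inv_lt_top, tsub_pos_iff_lt]
      rw [ENNReal.ofReal_lt_one, div_lt_one hK]
      exact hcK
    · rw [hS0]
      exact hS.2
  have hcover : {x | n x ≤ 1} ⊆ {x | n x = 0} ∪ ⋃ k, S k := by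
    intro x hx
    rcases (hn0 x).eq_or_lt with h | h
    · left; exact h.symm
    · right
      obtain ⟨k, hk⟩ := exists_nat_pow_near_of_lt_one h hx hqi (inv_lt_one_of_one_lt₀ hq)
      exact mem_iUnion.2 ⟨k, hk⟩
  have hint : IntegrableOn f {x | n x ≤ 1} ν := by
    refine ⟨hf.aestronglyMeasurable, ?_⟩
    refine lt_of_le_of_lt (lintegral_mono_set hcover) ?_
    refine lt_of_le_of_lt (lintegral_union_le _ _ _) ?_
    rw [setLIntegral_measure_zero _ _ hnull, zero_add]
    exact hfin
  refine ⟨hint, ?_⟩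
  have hPm : MeasurableSet {x | n x ≤ q⁻¹} := measurableSet_le hn measurable_const
  have hP : ∫ x in {x | n x ≤ q⁻¹}, f x ∂ν = c / K * ∫ x in {x | n x ≤ 1}, f x ∂ν := by
    have hpre' : T ⁻¹' {x | n x ≤ q⁻¹} = {x | n x ≤ 1} := by
      ext x
      simp only [mem_preimage, mem_ofPred_eq, hnT]
      rw [mul_le_iff_le_one_right hqi]
    conv_lhs => rw [hν', Measure.restrict_smul, integral_smul_measure,
      setIntegral_map hPm hf.aestronglyMeasurable hT.aemeasurable, hpre']
    simp_rw [hc, integral_const_mul]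
    rw [ENNReal.toReal_inv, ENNReal.toReal_ofReal hK.le, Complex.real_smul]
    push_cast
    ring
  have hun : {x | n x ≤ 1} = {x | q⁻¹ < n x ∧ n x ≤ 1} ∪ {x | n x ≤ q⁻¹} := by
    have := (inv_lt_one_of_one_lt₀ hq).le
    ext x
    simp only [mem_union, mem_ofPred_eq]
    constructor
    · intro h
      rcases lt_or_ge q⁻¹ (n x) with h' | h'
      · exact Or.inl ⟨h', h⟩
      · exact Or.inr h'
    · rintro (h | h)
      · exact h.2
      · linarith
  have hdis : Disjoint {x | q⁻¹ < n x ∧ n x ≤ 1} {x | n x ≤ q⁻¹} := by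
    rw [Set.disjoint_left]
    rintro x ⟨h, -⟩ h'
    exact absurd h (not_lt.2 h')
  have h3 : ∫ x in {x | n x ≤ 1}, f x ∂ν = (∫ x in {x | q⁻¹ < n x ∧ n x ≤ 1}, f x ∂ν)
      + ∫ x in {x | n x ≤ q⁻¹}, f x ∂ν := by
    conv_lhs => rw [hun]
    refine setIntegral_union hdis hPm hS (hint.mono_set ?_)
    rw [hun]; exact subset_union_right
  rw [hP] at h3
  linear_combination h3

theorem meas_Zball (p : ℕ) [Fact p.Prime] : MeasurableSet (Zball p) :=
  measurableSet_le measurable_norm measurable_const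

theorem meas_Pball (p : ℕ) [Fact p.Prime] : MeasurableSet (Pball p) :=
  measurableSet_lt measurable_norm measurable_const

theorem Pball_eq (p : ℕ) [Fact p.Prime] : Pball p = {x | ‖x‖ ≤ (p : ℝ)⁻¹} := by
  ext x
  have := Padic.norm_le_pow_iff_norm_lt_pow_add_one x (-1)
  simp only [Pball, Set.mem_ofPred_eq]
  simp at this
  exact this.symm

theorem mu_Pball (p : ℕ) [Fact p.Prime]
    (μ : Measure ℚ_[p]) [μ.IsAddHaarMeasure] (hμ : μ (Zball p) = 1) :
    μ (Pball p) = (p : ENNReal)⁻¹ := by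
  have hcov : Zball p = ⋃ i ∈ Finset.range p, (fun x : ℚ_[p] => -(i : ℚ_[p]) + x) ⁻¹' Pball p := by
    ext x
    simp only [Zball, Pball, Set.mem_ofPred_eq, Set.mem_iUnion, Set.mem_preimage,
      Finset.mem_range, exists_prop]
    constructor
    · intro hx
      obtain ⟨y, rfl⟩ : ∃ y : ℤ_[p], (y : ℚ_[p]) = x := ⟨⟨x, hx⟩, rfl⟩
      obtain ⟨n, hn, hn'⟩ := PadicInt.exists_mem_range y
      refine ⟨n, hn, ?_⟩
      rw [PadicInt.maximalIdeal_eq_span_p, Ideal.mem_span_singleton,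
        ← PadicInt.norm_lt_one_iff_dvd] at hn'
      rw [neg_add_eq_sub]
      rw [PadicInt.norm_def, PadicInt.coe_sub, PadicInt.coe_natCast] at hn'
      exact hn'
    · rintro ⟨i, hi, h⟩
      have : x = (i : ℚ_[p]) + (-(i : ℚ_[p]) + x) := by ring
      rw [this]
      refine (Padic.nonarchimedean _ _).trans (max_le ?_ h.le)
      exact_mod_cast Padic.norm_int_le_one (p := p) i
  have hdisj : (↑(Finset.range p) : Set ℕ).PairwiseDisjoint
      (fun i : ℕ => (fun x : ℚ_[p] => -(i : ℚ_[p]) + x) ⁻¹' Pball p) := by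
    intro i hi j hj hij
    rw [Function.onFun, Set.disjoint_left]
    intro x hx hx'
    simp only [Pball, Set.mem_preimage, Set.mem_ofPred_eq] at hx hx'
    apply hij
    have h1 : ‖((i - j : ℤ) : ℚ_[p])‖ < 1 := by
      have : ((i - j : ℤ) : ℚ_[p]) = (-(j : ℚ_[p]) + x) + -(-(i : ℚ_[p]) + x) := by
        push_cast; ring
      rw [this]
      refine (Padic.nonarchimedean _ _).trans_lt (max_lt hx' ?_)
      rwa [norm_neg]
    rw [Padic.norm_intCast_lt_one_iff] at h1
    simp only [Finset.coe_range, Set.mem_Iio] at hi hj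
    have := Int.eq_zero_of_abs_lt_dvd h1 (by rw [abs_lt]; omega)
    omega
  have hmm : ∀ i : ℕ, MeasurableSet ((fun x : ℚ_[p] => -(i : ℚ_[p]) + x) ⁻¹' Pball p) := fun i =>
    (measurable_const_add _) (meas_Pball p)
  rw [hcov, measure_biUnion_finset hdisj (fun i _ => hmm i)] at hμ
  simp only [measure_preimage_add, Finset.sum_const, Finset.card_range, nsmul_eq_mul] at hμ
  rw [mul_comm] at hμ
  exact ENNReal.eq_inv_of_mul_eq_one_left hμ

theorem map_mul_p (p : ℕ) [hp : Fact p.Prime]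
    (μ : Measure ℚ_[p]) [μ.IsAddHaarMeasure] (hμ : μ (Zball p) = 1) :
    μ.map (fun x => (p : ℚ_[p]) * x) = ENNReal.ofReal p • μ := by
  have hp0 : (p : ℚ_[p]) ≠ 0 := by exact_mod_cast hp.out.ne_zero
  have hpR : (0 : ℝ) < p := by exact_mod_cast hp.out.pos
  have h1 : (μ.map (fun x => (p : ℚ_[p]) * x)).IsAddHaarMeasure := by
    have := (ContinuousLinearEquiv.smulLeft (R₁ := ℚ_[p]) (M₁ := ℚ_[p]) (Units.mk0 _ hp0)).isAddHaarMeasure_map μ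
    exact this
  have h2 := Measure.isAddLeftInvariant_eq_smul (μ.map (fun x => (p : ℚ_[p]) * x)) μ
  set k := Measure.addHaarScalarFactor (μ.map (fun x => (p : ℚ_[p]) * x)) μ
  have h3 := congrArg (fun m => m (Pball p)) h2
  rw [Measure.map_apply (measurable_const_mul _) (meas_Pball p)] at h3
  have h4 : (fun x => (p : ℚ_[p]) * x) ⁻¹' Pball p = Zball p := by
    rw [Pball_eq]
    ext x
    simp only [Zball, Set.mem_preimage, Set.mem_ofPred_eq, norm_mul, Padic.norm_p]
    rw [mul_le_iff_le_one_right (by positivity)]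
  rw [h4, hμ, Measure.smul_apply, mu_Pball p μ hμ] at h3
  rw [h2]
  have h5 : (k : ENNReal) = p := by
    have h6 : (p : ENNReal) ≠ 0 := by exact_mod_cast hp.out.ne_zero
    have h7 : (1 : ENNReal) = k * (p : ENNReal)⁻¹ := h3
    rw [← div_eq_mul_inv, eq_comm, ENNReal.div_eq_one_iff h6 (ENNReal.natCast_ne_top p)] at h7
    exact h7
  rw [ENNReal.ofReal_natCast, ← h5]
  rfl

theorem cpow_norm_mul_p (p : ℕ) [hp : Fact p.Prime] (s : ℂ) (x : ℚ_[p]) :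
    (‖(p : ℚ_[p]) * x‖ : ℂ) ^ s = (p : ℂ) ^ (-s) * (‖x‖ : ℂ) ^ s := by
  rw [norm_mul, Padic.norm_p]
  push_cast
  rw [show ((p : ℂ)⁻¹) = (((p : ℝ)⁻¹ : ℝ) : ℂ) by push_cast; rfl,
    Complex.mul_cpow_ofReal_nonneg (by positivity) (norm_nonneg _)]
  congr 1
  push_cast
  rw [Complex.cpow_neg, Complex.inv_cpow]
  rw [Complex.natCast_arg]
  exact Real.pi_pos.ne

theorem meas_cpow (p : ℕ) [hp : Fact p.Prime] (s : ℂ) :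
    Measurable (fun x : ℚ_[p] => (‖x‖ : ℂ) ^ s) :=
  (Complex.measurable_ofReal.comp measurable_norm).pow_const s

theorem norm_p_cpow (p : ℕ) [hp : Fact p.Prime] (s : ℂ) : ‖(p : ℂ) ^ s‖ = (p : ℝ) ^ s.re :=
  Complex.norm_natCast_cpow_of_pos hp.out.pos s

theorem shell_eq (p : ℕ) [hp : Fact p.Prime] :
    {x : ℚ_[p] | (p : ℝ)⁻¹ < ‖x‖ ∧ ‖x‖ ≤ 1} = {x | ‖x‖ = 1} := by
  ext x
  have h := Set.ext_iff.1 (Pball_eq p) x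
  simp only [Pball, Set.mem_ofPred_eq] at h ⊢
  rw [← not_le, ← h, not_lt]
  exact ⟨fun h => le_antisymm h.2 h.1, fun h => ⟨h.ge, h.le⟩⟩

theorem meas_sph (p : ℕ) [hp : Fact p.Prime] : MeasurableSet {x : ℚ_[p] | ‖x‖ = 1} :=
  measurable_norm (measurableSet_singleton 1)

theorem Z_union (p : ℕ) [hp : Fact p.Prime] : Zball p = {x : ℚ_[p] | ‖x‖ = 1} ∪ Pball p := by
  ext x
  simp only [Zball, Pball, Set.mem_union, Set.mem_ofPred_eq]
  rw [le_iff_eq_or_lt]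

theorem SP_disj (p : ℕ) [hp : Fact p.Prime] : Disjoint {x : ℚ_[p] | ‖x‖ = 1} (Pball p) := by
  rw [Set.disjoint_left]
  intro x hx hx'
  simp only [Pball, Set.mem_ofPred_eq] at hx hx'
  linarith

theorem real_P (p : ℕ) [hp : Fact p.Prime]
    (μ : Measure ℚ_[p]) [SigmaFinite μ] [μ.IsAddHaarMeasure] (hμ : μ (Zball p) = 1) :
    μ.real (Pball p) = (p : ℝ)⁻¹ := by
  simp [Measure.real, mu_Pball p μ hμ]

theorem real_S (p : ℕ) [hp : Fact p.Prime]
    (μ : Measure ℚ_[p]) [SigmaFinite μ] [μ.IsAddHaarMeasure] (hμ : μ (Zball p) = 1) :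
    μ.real {x : ℚ_[p] | ‖x‖ = 1} = 1 - (p : ℝ)⁻¹ := by
  have h : μ.real (Zball p) = 1 := by simp [Measure.real, hμ]
  have hf : μ (Zball p) ≠ ⊤ := by simp [hμ]
  have h2 := hf
  rw [Z_union] at h2
  rw [Z_union, measureReal_union (SP_disj p) (meas_Pball p)
    (measure_ne_top_of_subset Set.subset_union_left h2)
    (measure_ne_top_of_subset Set.subset_union_right h2), real_P p μ hμ] at h
  linarith

theorem oneD (p : ℕ) [hp : Fact p.Prime]
    (μ : Measure ℚ_[p]) [SigmaFinite μ] [μ.IsAddHaarMeasure] (hμ : μ (Zball p) = 1)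
    (s : ℂ) (hs : -1 < s.re) :
    IntegrableOn (fun x : ℚ_[p] => (‖x‖ : ℂ) ^ s) (Zball p) μ ∧
    (∫ x in Zball p, (‖x‖ : ℂ) ^ s ∂μ) * (1 - (p : ℂ) ^ (-s) / p) = 1 - (p : ℂ)⁻¹ ∧
    (∫ x in Pball p, (‖x‖ : ℂ) ^ s ∂μ) = (∫ x in Zball p, (‖x‖ : ℂ) ^ s ∂μ) - (1 - (p : ℂ)⁻¹) := by
  have hp1 : (1 : ℝ) < p := by exact_mod_cast hp.out.one_lt
  have hSZ : {x : ℚ_[p] | ‖x‖ = 1} ⊆ Zball p := by rw [Z_union]; exact Set.subset_union_left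
  have hSfin : μ {x : ℚ_[p] | ‖x‖ = 1} ≠ ⊤ := measure_ne_top_of_subset hSZ (by simp [hμ])
  have hcongr : Set.EqOn (fun x : ℚ_[p] => (‖x‖ : ℂ) ^ s) (fun _ => 1) {x : ℚ_[p] | ‖x‖ = 1} := by
    intro x hx
    simp only [Set.mem_ofPred_eq] at hx
    simp [hx]
  have hSi : IntegrableOn (fun x : ℚ_[p] => (‖x‖ : ℂ) ^ s) {x : ℚ_[p] | ‖x‖ = 1} μ := by
    rw [integrableOn_congr_fun hcongr (meas_sph p)]
    exact integrableOn_const hSfin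
  have hSv : ∫ x in {x : ℚ_[p] | ‖x‖ = 1}, (‖x‖ : ℂ) ^ s ∂μ = 1 - (p : ℂ)⁻¹ := by
    rw [setIntegral_congr_fun (meas_sph p) hcongr, setIntegral_const, real_S p μ hμ]
    simp
  have key := selfsim μ (fun x => (p : ℚ_[p]) * x) (measurable_const_mul _) (fun x => ‖x‖)
    measurable_norm (fun x => norm_nonneg x) p hp1
    (fun x => by simp only [norm_mul, Padic.norm_p]) (by simp) p (by linarith)
    (map_mul_p p μ hμ) (fun x => (‖x‖ : ℂ) ^ s) (meas_cpow p s) ((p : ℂ) ^ (-s))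
    (fun x => cpow_norm_mul_p p s x)
    (by
      rw [norm_p_cpow]
      conv_rhs => rw [← Real.rpow_one (p : ℝ)]
      exact Real.rpow_lt_rpow_of_exponent_lt hp1 (by simp; linarith))
    (by rw [shell_eq]; exact hSi)
  rw [shell_eq, hSv] at key
  refine ⟨key.1, ?_, ?_⟩
  · simpa [Zball] using key.2
  · have := setIntegral_union (SP_disj p) (meas_Pball p) hSi
      (key.1.mono_set (t := Zball p) (by rw [Z_union]; exact Set.subset_union_right))
    rw [← Z_union, hSv] at this
    rw [this]; ring

theorem trans_restrict (p : ℕ) [hp : Fact p.Prime]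
    (μ : Measure ℚ_[p]) [SigmaFinite μ] [μ.IsAddHaarMeasure] (z : ℚ_[p]) (hz : z ∈ Zball p) :
    MeasurePreserving (fun y => y - z) (μ.restrict (Zball p)) (μ.restrict (Zball p)) := by
  have h := (measurePreserving_sub_right μ z).restrict_preimage (meas_Zball p)
  convert h using 2
  ext y
  simp only [Zball, Set.mem_preimage, Set.mem_ofPred_eq] at hz ⊢
  constructor
  · intro h
    rw [sub_eq_add_neg]
    exact (Padic.nonarchimedean _ _).trans (max_le h (by rwa [norm_neg]))
  · intro h
    rw [← sub_add_cancel y z]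
    exact (Padic.nonarchimedean _ _).trans (max_le h hz)

theorem pi_shear (p : ℕ) [hp : Fact p.Prime]
    (μ : Measure ℚ_[p]) [SigmaFinite μ] [μ.IsAddHaarMeasure] (hμ : μ (Zball p) = 1) :
    MeasurePreserving (fun x : Fin 3 → ℚ_[p] => (x 0 - x 2, x 1 - x 2))
      (Measure.pi fun _ => μ.restrict (Zball p))
      ((μ.restrict (Zball p)).prod (μ.restrict (Zball p))) := by
  have : IsProbabilityMeasure (μ.restrict (Zball p)) := ⟨by simp [hμ]⟩
  set m := μ.restrict (Zball p) with hm
  have h1 := measurePreserving_piFinSuccAbove (fun _ : Fin 3 => m) 2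
  have h2 := (MeasurePreserving.id m).prod (measurePreserving_piFinTwo (fun _ : Fin 2 => m))
  have h3 : MeasurePreserving (fun w : ℚ_[p] × (ℚ_[p] × ℚ_[p]) =>
      (id w.1, (w.2.1 - w.1, w.2.2 - w.1))) (m.prod (m.prod m)) (m.prod (m.prod m)) := by
    refine MeasurePreserving.skew_product (MeasurePreserving.id m)
      (g := fun (z : ℚ_[p]) (w : ℚ_[p] × ℚ_[p]) => (w.1 - z, w.2 - z)) (by fun_prop) ?_
    have : ∀ᵐ z ∂m, z ∈ Zball p := ae_restrict_mem (meas_Zball p)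
    filter_upwards [this] with z hz
    exact ((trans_restrict p μ z hz).prod (trans_restrict p μ z hz)).map_eq
  have h4 := (measurePreserving_snd (μ := m) (ν := m.prod m)).comp (h3.comp (h2.comp h1))
  exact h4


theorem norm_sub_of_lt (p : ℕ) [hp : Fact p.Prime] (u v : ℚ_[p]) (hu : ‖u‖ = 1) (hv : ‖v‖ < 1) :
    ‖u - v‖ = 1 := by
  have h : ‖u‖ ≠ ‖-v‖ := by rw [norm_neg]; linarith
  rw [sub_eq_add_neg, Padic.add_eq_max_of_ne h, norm_neg, hu, max_eq_left hv.le]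

theorem shell_eq2 (p : ℕ) [hp : Fact p.Prime] :
    {w : ℚ_[p] × ℚ_[p] | (p : ℝ)⁻¹ < ‖w‖ ∧ ‖w‖ ≤ 1} =
      (({x | ‖x‖ = 1} ×ˢ {x | ‖x‖ = 1}) ∪ ({x | ‖x‖ = 1} ×ˢ Pball p)) ∪
        (Pball p ×ˢ {x | ‖x‖ = 1}) := by
  ext ⟨u, v⟩
  have h := Set.ext_iff.1 (Pball_eq p) u
  have h' := Set.ext_iff.1 (Pball_eq p) v
  simp only [Pball, Set.mem_ofPred_eq, Prod.norm_mk, Set.mem_union, Set.mem_prod, lt_max_iff,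
    max_le_iff] at h h' ⊢
  rw [← not_le, ← not_le, ← h, ← h', not_lt, not_lt]
  generalize ‖u‖ = x
  generalize ‖v‖ = y
  constructor
  · rintro ⟨h1, h2, h3⟩
    rcases h2.eq_or_lt with h2 | h2 <;> rcases h3.eq_or_lt with h3 | h3
    · exact Or.inl (Or.inl ⟨h2, h3⟩)
    · exact Or.inl (Or.inr ⟨h2, h3⟩)
    · exact Or.inr ⟨h2, h3⟩
    · rcases h1 with h1 | h1 <;> linarith
  · rintro ((⟨h1, h2⟩ | ⟨h1, h2⟩) | ⟨h1, h2⟩)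
    · exact ⟨Or.inl h1.ge, h1.le, h2.le⟩
    · exact ⟨Or.inl h1.ge, h1.le, h2.le⟩
    · exact ⟨Or.inr h2.ge, h1.le, h2.le⟩

theorem twoD (p : ℕ) [hp : Fact p.Prime]
    (μ : Measure ℚ_[p]) [SigmaFinite μ] [μ.IsAddHaarMeasure] (hμ : μ (Zball p) = 1)
    (a b c : ℂ) (ha : -1 < a.re) (hb : -1 < b.re) (hc : -1 < c.re) (habc : -2 < (c + a + b).re) :
    IntegrableOn (fun w : ℚ_[p] × ℚ_[p] =>
      (‖w.1 - w.2‖ : ℂ) ^ c * (‖w.1‖ : ℂ) ^ a * (‖w.2‖ : ℂ) ^ b)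
      (Zball p ×ˢ Zball p) (μ.prod μ) ∧
    (∫ w in Zball p ×ˢ Zball p,
      (‖w.1 - w.2‖ : ℂ) ^ c * (‖w.1‖ : ℂ) ^ a * (‖w.2‖ : ℂ) ^ b ∂(μ.prod μ)) *
        (1 - (p : ℂ) ^ (-(c + a + b)) / p ^ 2) =
      (1 - (p : ℂ)⁻¹) * (((∫ x in Zball p, (‖x‖ : ℂ) ^ a ∂μ) - (1 - (p : ℂ)⁻¹)) +
        ((∫ x in Zball p, (‖x‖ : ℂ) ^ b ∂μ) - (1 - (p : ℂ)⁻¹)) +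
        ((∫ x in Zball p, (‖x‖ : ℂ) ^ c ∂μ) - (p : ℂ)⁻¹)) := by
  have hp1 : (1 : ℝ) < p := by exact_mod_cast hp.out.one_lt
  have hpC : (p : ℂ) ≠ 0 := by exact_mod_cast hp.out.ne_zero
  have hZfin : μ (Zball p) ≠ ⊤ := by simp [hμ]
  have hPZ : Pball p ⊆ Zball p := by rw [Z_union]; exact Set.subset_union_right
  have hSZ : {x : ℚ_[p] | ‖x‖ = 1} ⊆ Zball p := by rw [Z_union]; exact Set.subset_union_left
  have hPfin : μ (Pball p) ≠ ⊤ := measure_ne_top_of_subset hPZ hZfin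
  have hSfin : μ {x : ℚ_[p] | ‖x‖ = 1} ≠ ⊤ := measure_ne_top_of_subset hSZ hZfin
  have hSm := meas_sph p
  have hPm := meas_Pball p
  have hZm := meas_Zball p
  have hSP := SP_disj p
  have hZu := Z_union p
  have hSr := real_S p μ hμ
  have hPr := real_P p μ hμ
  obtain ⟨hai, -, haP⟩ := oneD p μ hμ a ha
  obtain ⟨hbi, -, hbP⟩ := oneD p μ hμ b hb
  obtain ⟨hci, -, -⟩ := oneD p μ hμ c hc
  set S : Set ℚ_[p] := {x | ‖x‖ = 1} with hSdef
  set f : ℚ_[p] × ℚ_[p] → ℂ := fun w =>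
      (‖w.1 - w.2‖ : ℂ) ^ c * (‖w.1‖ : ℂ) ^ a * (‖w.2‖ : ℂ) ^ b with hf
  have hfm : Measurable f :=
    (((meas_cpow p c).comp (measurable_fst.sub measurable_snd)).mul
      ((meas_cpow p a).comp measurable_fst)).mul ((meas_cpow p b).comp measurable_snd)
  have h1S : IntegrableOn (fun _ : ℚ_[p] => (1 : ℂ)) S μ := integrableOn_const hSfin
  have h1P : IntegrableOn (fun _ : ℚ_[p] => (1 : ℂ)) (Pball p) μ := integrableOn_const hPfin
  have v1S : ∫ _ in S, (1 : ℂ) ∂μ = 1 - (p : ℂ)⁻¹ := by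
    rw [setIntegral_const, hSr]; simp
  have v1P : ∫ _ in Pball p, (1 : ℂ) ∂μ = (p : ℂ)⁻¹ := by
    rw [setIntegral_const, hPr]; simp
  -- S × P
  have eSP : Set.EqOn f (fun w => (1 : ℂ) * (‖w.2‖ : ℂ) ^ b) (S ×ˢ Pball p) := by
    rintro ⟨u, v⟩ ⟨hu, hv⟩
    simp only [hSdef, Pball, Set.mem_ofPred_eq] at hu hv
    simp [hf, norm_sub_of_lt p u v hu hv, hu]
  have iSP : IntegrableOn f (S ×ˢ Pball p) (μ.prod μ) := by
    rw [integrableOn_congr_fun eSP (hSm.prod hPm), IntegrableOn, ← Measure.prod_restrict]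
    exact Integrable.mul_prod h1S (hbi.mono_set hPZ)
  have vSP : ∫ w in S ×ˢ Pball p, f w ∂(μ.prod μ) =
      (1 - (p : ℂ)⁻¹) * ((∫ x in Zball p, (‖x‖ : ℂ) ^ b ∂μ) - (1 - (p : ℂ)⁻¹)) := by
    rw [setIntegral_congr_fun (hSm.prod hPm) eSP,
      setIntegral_prod_mul (fun _ : ℚ_[p] => (1 : ℂ)) (fun v : ℚ_[p] => (‖v‖ : ℂ) ^ b), v1S, hbP]
  -- P × S
  have ePS : Set.EqOn f (fun w => (‖w.1‖ : ℂ) ^ a * (1 : ℂ)) (Pball p ×ˢ S) := by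
    rintro ⟨u, v⟩ ⟨hu, hv⟩
    simp only [hSdef, Pball, Set.mem_ofPred_eq] at hu hv
    simp only [hf]
    rw [norm_sub_rev, norm_sub_of_lt p v u hv hu, hv]
    simp
  have iPS : IntegrableOn f (Pball p ×ˢ S) (μ.prod μ) := by
    rw [integrableOn_congr_fun ePS (hPm.prod hSm), IntegrableOn, ← Measure.prod_restrict]
    exact Integrable.mul_prod (hai.mono_set hPZ) h1S
  have vPS : ∫ w in Pball p ×ˢ S, f w ∂(μ.prod μ) =
      (1 - (p : ℂ)⁻¹) * ((∫ x in Zball p, (‖x‖ : ℂ) ^ a ∂μ) - (1 - (p : ℂ)⁻¹)) := by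
    rw [setIntegral_congr_fun (hPm.prod hSm) ePS,
      setIntegral_prod_mul (fun v : ℚ_[p] => (‖v‖ : ℂ) ^ a) (fun _ : ℚ_[p] => (1 : ℂ)), v1S, haP,
      mul_comm]
  -- S × Z for the difference
  set h : ℚ_[p] × ℚ_[p] → ℂ := fun w => (‖w.1 - w.2‖ : ℂ) ^ c with hh
  set k : ℚ_[p] × ℚ_[p] → ℂ := fun w => (1 : ℂ) * (‖w.2‖ : ℂ) ^ c with hk
  have hkm : Measurable k := ((meas_cpow p c).comp measurable_snd).const_mul 1
  have hpres : MeasurePreserving (fun w : ℚ_[p] × ℚ_[p] => (id w.1, w.2 - w.1))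
      ((μ.restrict S).prod (μ.restrict (Zball p))) ((μ.restrict S).prod (μ.restrict (Zball p))) := by
    refine MeasurePreserving.skew_product (MeasurePreserving.id _)
      (g := fun (z : ℚ_[p]) (w : ℚ_[p]) => w - z) (by fun_prop) ?_
    have : ∀ᵐ z ∂(μ.restrict S), z ∈ S := ae_restrict_mem hSm
    filter_upwards [this] with z hz
    exact (trans_restrict p μ z (hSZ hz)).map_eq
  have hhk : h = k ∘ (fun w : ℚ_[p] × ℚ_[p] => (id w.1, w.2 - w.1)) := by
    ext w
    simp only [hh, hk, Function.comp, one_mul]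
    rw [norm_sub_rev]
  have ki : Integrable k ((μ.restrict S).prod (μ.restrict (Zball p))) :=
    Integrable.mul_prod h1S hci
  have iSZ : IntegrableOn h (S ×ˢ Zball p) (μ.prod μ) := by
    rw [IntegrableOn, ← Measure.prod_restrict, hhk, hpres.integrable_comp hkm.aestronglyMeasurable]
    exact ki
  have vSZ : ∫ w in S ×ˢ Zball p, h w ∂(μ.prod μ) =
      (1 - (p : ℂ)⁻¹) * ∫ x in Zball p, (‖x‖ : ℂ) ^ c ∂μ := by
    rw [← v1S, ← setIntegral_prod_mul (fun _ : ℚ_[p] => (1 : ℂ)) (fun v : ℚ_[p] => (‖v‖ : ℂ) ^ c),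
      ← Measure.prod_restrict, hhk]
    conv_rhs => rw [← hpres.map_eq]
    rw [integral_map hpres.measurable.aemeasurable hkm.aestronglyMeasurable]
    rfl
  have vhSP : ∫ w in S ×ˢ Pball p, h w ∂(μ.prod μ) = (1 - (p : ℂ)⁻¹) * (p : ℂ)⁻¹ := by
    have e : Set.EqOn h (fun w => (1 : ℂ) * (1 : ℂ)) (S ×ˢ Pball p) := by
      rintro ⟨u, v⟩ ⟨hu, hv⟩
      simp only [hSdef, Pball, Set.mem_ofPred_eq] at hu hv
      simp [hh, norm_sub_of_lt p u v hu hv]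
    rw [setIntegral_congr_fun (hSm.prod hPm) e,
      setIntegral_prod_mul (fun _ : ℚ_[p] => (1 : ℂ)) (fun _ : ℚ_[p] => (1 : ℂ)), v1S, v1P]
  have d1 : Disjoint (S ×ˢ S) (S ×ˢ Pball p) := Set.disjoint_prod.2 (Or.inr hSP)
  have hSZu : S ×ˢ Zball p = S ×ˢ S ∪ S ×ˢ Pball p := by rw [hZu, Set.prod_union]
  have hsum : ∫ w in S ×ˢ Zball p, h w ∂(μ.prod μ) = (∫ w in S ×ˢ S, h w ∂(μ.prod μ)) +
      ∫ w in S ×ˢ Pball p, h w ∂(μ.prod μ) := by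
    rw [hSZu] at iSZ ⊢
    exact setIntegral_union d1 (hSm.prod hPm) (iSZ.mono_set Set.subset_union_left)
      (iSZ.mono_set Set.subset_union_right)
  have eSS : Set.EqOn f h (S ×ˢ S) := by
    rintro ⟨u, v⟩ ⟨hu, hv⟩
    simp only [hSdef, Set.mem_ofPred_eq] at hu hv
    simp [hf, hh, hu, hv]
  have iSS : IntegrableOn f (S ×ˢ S) (μ.prod μ) := by
    rw [integrableOn_congr_fun eSS (hSm.prod hSm)]
    exact iSZ.mono_set (Set.prod_mono_right hSZ)
  have vSS : ∫ w in S ×ˢ S, f w ∂(μ.prod μ) =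
      (1 - (p : ℂ)⁻¹) * ((∫ x in Zball p, (‖x‖ : ℂ) ^ c ∂μ) - (p : ℂ)⁻¹) := by
    rw [setIntegral_congr_fun (hSm.prod hSm) eSS]
    rw [vSZ, vhSP] at hsum
    linear_combination -hsum
  -- the shell
  have d2 : Disjoint (S ×ˢ S ∪ S ×ˢ Pball p) (Pball p ×ˢ S) := by
    rw [Set.disjoint_union_left]
    exact ⟨Set.disjoint_prod.2 (Or.inl hSP), Set.disjoint_prod.2 (Or.inl hSP)⟩
  have iShell : IntegrableOn f {w : ℚ_[p] × ℚ_[p] | (p : ℝ)⁻¹ < ‖w‖ ∧ ‖w‖ ≤ 1} (μ.prod μ) := by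
    rw [shell_eq2]
    exact (iSS.union iSP).union iPS
  have vShell : ∫ w in {w : ℚ_[p] × ℚ_[p] | (p : ℝ)⁻¹ < ‖w‖ ∧ ‖w‖ ≤ 1}, f w ∂(μ.prod μ) =
      (1 - (p : ℂ)⁻¹) * (((∫ x in Zball p, (‖x‖ : ℂ) ^ a ∂μ) - (1 - (p : ℂ)⁻¹)) +
        ((∫ x in Zball p, (‖x‖ : ℂ) ^ b ∂μ) - (1 - (p : ℂ)⁻¹)) +
        ((∫ x in Zball p, (‖x‖ : ℂ) ^ c ∂μ) - (p : ℂ)⁻¹)) := by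
    rw [shell_eq2, setIntegral_union d2 (hPm.prod hSm) (iSS.union iSP) iPS,
      setIntegral_union d1 (hSm.prod hPm) iSS iSP, vSS, vSP, vPS]
    ring
  have hball : {w : ℚ_[p] × ℚ_[p] | ‖w‖ ≤ 1} = Zball p ×ˢ Zball p := by
    ext ⟨u, v⟩
    simp [Zball, Prod.norm_mk]
  have hT := map_mul_p p μ hμ
  have hTm : Measurable (fun x : ℚ_[p] => (p : ℚ_[p]) * x) := measurable_const_mul _
  have key := selfsim (μ.prod μ) (Prod.map (fun x => (p : ℚ_[p]) * x) (fun x => (p : ℚ_[p]) * x))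
    (hTm.prodMap hTm) (fun w => ‖w‖)
    measurable_norm (fun x => norm_nonneg x) p hp1
    (fun x => by
      simp only [Prod.norm_def, Prod.map, norm_mul, Padic.norm_p]
      rw [mul_max_of_nonneg _ _ (by positivity)]) (by simp) (p ^ 2) (by positivity)
    (by
      rw [← Measure.map_prod_map _ _ hTm hTm, hT, Measure.prod_smul_left, Measure.prod_smul_right,
        smul_smul, ← ENNReal.ofReal_mul (by positivity), pow_two])
    f hfm ((p : ℂ) ^ (-(c + a + b)))
    (fun w => by
      simp only [hf, Prod.map, ← mul_sub, cpow_norm_mul_p]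
      rw [show -(c + a + b) = -c + -a + -b by ring, Complex.cpow_add _ _ hpC,
        Complex.cpow_add _ _ hpC]
      ring)
    (by
      rw [norm_p_cpow]
      rw [show ((p : ℝ) ^ 2) = (p : ℝ) ^ (2 : ℝ) by norm_cast]
      refine Real.rpow_lt_rpow_of_exponent_lt hp1 ?_
      rw [Complex.neg_re]; linarith)
    iShell
  rw [vShell, hball] at key
  refine ⟨key.1, ?_⟩
  rw [← key.2]
  push_cast
  rfl

theorem p_cpow_ne (p : ℕ) [hp : Fact p.Prime] (n : ℂ) (h : 0 < n.re) : (p : ℂ) ^ n - 1 ≠ 0 := by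
  intro h0
  have h1 : (p : ℂ) ^ n = 1 := by linear_combination h0
  have h2 := norm_p_cpow p n
  rw [h1, norm_one] at h2
  have := Real.one_lt_rpow (by exact_mod_cast hp.out.one_lt : (1 : ℝ) < p) h
  linarith

theorem J_val (p : ℕ) [hp : Fact p.Prime]
    (μ : Measure ℚ_[p]) [SigmaFinite μ] [μ.IsAddHaarMeasure] (hμ : μ (Zball p) = 1)
    (s : ℂ) (hs : -1 < s.re) :
    (∫ x in Zball p, (‖x‖ : ℂ) ^ s ∂μ) =
      (1 - (p : ℂ)⁻¹) * (1 + 1 / ((p : ℂ) ^ (1 + s) - 1)) := by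
  have h := (oneD p μ hμ s hs).2.1
  have hpC : (p : ℂ) ≠ 0 := by exact_mod_cast hp.out.ne_zero
  have h1 := p_cpow_ne p (1 + s) (by simp; linarith)
  have hs0 : (p : ℂ) ^ s ≠ 0 := by simp [Complex.cpow_eq_zero_iff, hpC]
  rw [Complex.cpow_neg] at h
  rw [Complex.cpow_add _ _ hpC, Complex.cpow_one] at h1 ⊢
  set J := ∫ x in Zball p, (‖x‖ : ℂ) ^ s ∂μ
  generalize (p : ℂ) ^ s = X at *
  have e : 1 + 1 / ((p : ℂ) * X - 1) = p * X / (p * X - 1) := by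
    rw [eq_div_iff h1, add_mul, one_div, inv_mul_cancel₀ h1]; ring
  rw [e, mul_div_assoc', eq_div_iff h1]
  field_simp at h ⊢
  linear_combination h

theorem statement_19 (p : ℕ) [Fact p.Prime]
    (μ : Measure ℚ_[p]) [SigmaFinite μ] [μ.IsAddHaarMeasure] (hμ : μ (Zball p) = 1)
    (β : ℂ) (hβ : -(1 / 6 : ℝ) < β.re) :
    Integrable
      (fun x : Fin 3 → ℚ_[p] =>
        (‖x 0 - x 1‖ : ℂ) ^ (2 * β) * (‖x 0 - x 2‖ : ℂ) ^ (3 * β) *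
          (‖x 1 - x 2‖ : ℂ) ^ (6 * β))
      (Measure.pi fun _ => μ.restrict (Zball p)) ∧
    (∫ x : Fin 3 → ℚ_[p],
        (‖x 0 - x 1‖ : ℂ) ^ (2 * β) * (‖x 0 - x 2‖ : ℂ) ^ (3 * β) *
          (‖x 1 - x 2‖ : ℂ) ^ (6 * β)
        ∂(Measure.pi fun _ => μ.restrict (Zball p))) =
      (p : ℂ) ^ (11 * β) / ((p : ℂ) ^ (2 + 11 * β) - 1) *
        (((p : ℂ) - 1) * ((p : ℂ) - 2) + ((p : ℂ) - 1) ^ 2 *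
          (1 / ((p : ℂ) ^ (1 + 2 * β) - 1) + 1 / ((p : ℂ) ^ (1 + 3 * β) - 1) +
            1 / ((p : ℂ) ^ (1 + 6 * β) - 1))) := by
  have hpC : (p : ℂ) ≠ 0 := by exact_mod_cast (Fact.out : p.Prime).ne_zero
  have r2 : (2 * β).re = 2 * β.re := by simp
  have r3 : (3 * β).re = 3 * β.re := by simp
  have r6 : (6 * β).re = 6 * β.re := by simp
  have r11 : (11 * β).re = 11 * β.re := by simp
  have h2 : -1 < (2 * β).re := by rw [r2]; linarith
  have h3 : -1 < (3 * β).re := by rw [r3]; linarith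
  have h6 : -1 < (6 * β).re := by rw [r6]; linarith
  have hsum : 2 * β + 3 * β + 6 * β = 11 * β := by ring
  obtain ⟨hi, hv⟩ := twoD p μ hμ (3 * β) (6 * β) (2 * β) h3 h6 h2 (by rw [hsum, r11]; linarith)
  rw [J_val p μ hμ _ h2, J_val p μ hμ _ h3, J_val p μ hμ _ h6, hsum] at hv
  have hpres := pi_shear p μ hμ
  set g : ℚ_[p] × ℚ_[p] → ℂ := fun w =>
    (‖w.1 - w.2‖ : ℂ) ^ (2 * β) * (‖w.1‖ : ℂ) ^ (3 * β) * (‖w.2‖ : ℂ) ^ (6 * β) with hg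
  have hcomp : (fun x : Fin 3 → ℚ_[p] =>
        (‖x 0 - x 1‖ : ℂ) ^ (2 * β) * (‖x 0 - x 2‖ : ℂ) ^ (3 * β) *
          (‖x 1 - x 2‖ : ℂ) ^ (6 * β)) =
      g ∘ (fun x : Fin 3 → ℚ_[p] => (x 0 - x 2, x 1 - x 2)) := by
    ext x
    simp only [hg, Function.comp, sub_sub_sub_cancel_right]
  rw [IntegrableOn, ← Measure.prod_restrict] at hi
  rw [← Measure.prod_restrict] at hv
  rw [hcomp]
  refine ⟨(hpres.integrable_comp hi.1).2 hi, ?_⟩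
  have hI : ∫ x, (g ∘ (fun x : Fin 3 → ℚ_[p] => (x 0 - x 2, x 1 - x 2))) x
      ∂(Measure.pi fun _ => μ.restrict (Zball p)) =
      ∫ w, g w ∂((μ.restrict (Zball p)).prod (μ.restrict (Zball p))) := by
    conv_rhs => rw [← hpres.map_eq]
    rw [integral_map hpres.measurable.aemeasurable (by rw [hpres.map_eq]; exact hi.1)]
    rfl
  rw [hI]
  set I := ∫ w, g w ∂((μ.restrict (Zball p)).prod (μ.restrict (Zball p)))
  have n11 := p_cpow_ne p (2 + 11 * β) (by
    rw [Complex.add_re, r11, Complex.re_ofNat]; linarith)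
  have hs0 : (p : ℂ) ^ (11 * β) ≠ 0 := by simp [Complex.cpow_eq_zero_iff, hpC]
  have e2 : (p : ℂ) ^ (2 + 11 * β) = (p : ℂ) ^ 2 * (p : ℂ) ^ (11 * β) := by
    rw [Complex.cpow_add _ _ hpC]; norm_cast
  rw [e2] at n11 ⊢
  rw [Complex.cpow_neg] at hv
  generalize 1 / ((p : ℂ) ^ (1 + 2 * β) - 1) = A at *
  generalize 1 / ((p : ℂ) ^ (1 + 3 * β) - 1) = B at *
  generalize 1 / ((p : ℂ) ^ (1 + 6 * β) - 1) = C at *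
  generalize (p : ℂ) ^ (11 * β) = X at *
  rw [div_mul_eq_mul_div, eq_div_iff n11]
  field_simp at hv
  linear_combination hv

end LogCoulomb
end
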